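/- Let K be any field and let E be a finite graph. Let k denote the number of vertices of E which are sinks in E but which are not vertices of E_sf, and let F be any totally looped graph constructed from E_sf via some finite step-by-step process in which at each step one collapses at a regular vertex which is not the base of a loop. Then there exist (when k ≥ 1) positive integers m_1, ..., m_k, a positive integer n, and a full idempotent p ∈ M_n(L_K(F)) such that L_K(E) ≅ (M_{m_1}(K) ⊕ M_{m_2}(K) ⊕ ⋯ ⊕ M_{m_k}(K)) ⊕ p M_n(L_K(F)) p as K-algebras (the matrix-ring summands being absent when k = 0). -/

import Mathlib

/-!
Write `S ~ R` when `S` is isomorphic to a full corner of a matrix algebra of positive size over `R`.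
This relation is transitive (`IsMatrixCorner.trans`), and if `S` is itself a full corner of `R`
then `R ~ S` (`IsFullCornerEmb.isMatrixCorner`).

If `v` is a regular vertex of `H` which is not the base of a loop, the Leavitt path algebra of the
collapse at `v` embeds into `L_K(H)` through `[ef] ↦ ef`. Its image is the corner at `1 - v`, and
`1 - v` is full because `v = ∑ f f*` with `r(f) ≠ v`. The embedding is injective because its
composite with an explicit homomorphism from `L_K(H)` to matrices over the Leavitt path algebra of
the collapse is `x ↦ x E₁₁` (`LeavittPathAlgebra.collapse_isMatrixCorner`). So `L_K(H)` is related
to the Leavitt path algebra of each of its collapses.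

Eliminating a source which is regular is a collapse, since there are no edges `[ef]`. A source which
is a sink is an isolated vertex. Keeping these isolated vertices as a discrete graph `D_k` gives
`L_K(E) ~ L_K(D_k ⊔ E_sf) ~ L_K(D_k ⊔ F) ~ K ^ k × L_K(F)`, where `k` counts the sinks of `E` which
have been removed. Finally, a full corner of matrices over `K ^ k × L_K(F)` splits as a product, and
a full idempotent of `M_n(K)` of rank `m > 0` cuts out a copy of `M_m(K)`
(`IsMatrixCorner.exists_iso_prod`).
-/

/-! ## Finite directed graphs -/

structure FinGraph where
  V : Type
  E : Type
  [fintypeV : Fintype V]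
  [fintypeE : Fintype E]
  [decEqV : DecidableEq V]
  [decEqE : DecidableEq E]
  s : E → V
  r : E → V

attribute [instance] FinGraph.fintypeV FinGraph.fintypeE FinGraph.decEqV FinGraph.decEqE

namespace FinGraph

/-- A vertex is regular if it emits at least one edge. -/
def IsRegular (G : FinGraph) (v : G.V) : Prop := ∃ e : G.E, G.s e = v

/-- A sink emits no edges. -/
def IsSink (G : FinGraph) (v : G.V) : Prop := ∀ e : G.E, G.s e ≠ v

/-- A source receives no edges. -/
def IsSource (G : FinGraph) (v : G.V) : Prop := ∀ e : G.E, G.r e ≠ v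

/-- A graph is totally looped if every regular vertex is the base of a loop. -/
def TotallyLooped (G : FinGraph) : Prop :=
  ∀ v : G.V, G.IsRegular v → ∃ e : G.E, G.s e = v ∧ G.r e = v

/-- A set of vertices is hereditary if it is closed under ranges of edges emitted
from its elements (equivalently, under reachability by paths). -/
def Hereditary (G : FinGraph) (T : Finset G.V) : Prop :=
  ∀ e : G.E, G.s e ∈ T → G.r e ∈ T

/-- A set of vertices `H` is saturated if every regular vertex all of whose emitted
edges end in `H` belongs to `H`. -/
def Saturated (G : FinGraph) (H : Set G.V) : Prop :=
  ∀ v : G.V, G.IsRegular v → (∀ e : G.E, G.s e = v → G.r e ∈ H) → v ∈ H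

/-- The trivial graph: one vertex, no edges. -/
def IsTrivial (G : FinGraph) : Prop :=
  Nonempty G.V ∧ Subsingleton G.V ∧ IsEmpty G.E

/-- A graph is source-free if every vertex receives at least one edge. -/
def IsSourceFree (G : FinGraph) : Prop := ∀ v : G.V, ∃ e : G.E, G.r e = v

/-- The graph with `k` vertices and no edges. -/
def discrete (k : ℕ) : FinGraph where
  V := Fin k
  E := Empty
  s := Empty.elim
  r := Empty.elim

/-- The straight line graph `A_n` with `n` vertices `v_0, …, v_{n-1}` and
edges `v_{i+1} → v_i` for `0 ≤ i ≤ n-2`. -/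
def line (n : ℕ) : FinGraph where
  V := Fin n
  E := Fin (n - 1)
  s := fun i => ⟨i.1 + 1, by have := i.isLt; omega⟩
  r := fun i => ⟨i.1, by have := i.isLt; omega⟩

/-- Disjoint union of two graphs. -/
def disjUnion (G H : FinGraph) : FinGraph where
  V := G.V ⊕ H.V
  E := G.E ⊕ H.E
  s := Sum.map G.s H.s
  r := Sum.map G.r H.r

/-- The restriction graph of `G` to a hereditary set `T` of vertices. -/
def restrict (G : FinGraph) (T : Finset G.V) (hT : G.Hereditary T) : FinGraph where
  V := {v : G.V // v ∈ T}
  E := {e : G.E // G.s e ∈ T}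
  s := fun e => ⟨G.s e.1, e.2⟩
  r := fun e => ⟨G.r e.1, hT e.1 e.2⟩

/-- The "strands of hair" extension `F⁺(n)` of `F`:  at each vertex `v` a strand
`v^{n v - 1} → ⋯ → v^1 → v` of length `n v - 1` is attached. -/
def hairExtension (F : FinGraph) (n : F.V → ℕ) : FinGraph where
  V := F.V ⊕ (Σ v : F.V, Fin (n v - 1))
  E := F.E ⊕ (Σ v : F.V, Fin (n v - 1))
  s := Sum.elim (fun e => Sum.inl (F.s e)) (fun p => Sum.inr p)
  r := Sum.elim (fun e => Sum.inl (F.r e))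
    (fun p => if h : (p.2 : ℕ) = 0 then Sum.inl p.1
      else Sum.inr ⟨p.1, ⟨(p.2 : ℕ) - 1, by have := p.2.isLt; omega⟩⟩)

/-- The "Move (R)" graph at a vertex `w` which emits precisely one edge `f`
which is not a loop: `w` is removed, and each edge `e` into `w` is replaced by
an edge `[ef]` from `s e` to `r f`. -/
def moveR (E : FinGraph) (w : E.V) (f : E.E)
    (hsf : E.s f = w) (huniq : ∀ e : E.E, E.s e = w → e = f) (hnl : E.r f ≠ w) : FinGraph where
  V := {v : E.V // v ≠ w}
  E := {e : E.E // E.r e ≠ w ∧ e ≠ f} ⊕ {e : E.E // E.r e = w}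
  s := Sum.elim
    (fun e => ⟨E.s e.1, fun h => e.2.2 (huniq e.1 h)⟩)
    (fun e => ⟨E.s e.1, fun h => hnl ((huniq e.1 h) ▸ e.2)⟩)
  r := Sum.elim
    (fun e => ⟨E.r e.1, e.2.1⟩)
    (fun _ => ⟨E.r f, hnl⟩)

/-- The collapse of `E` at a vertex `v` which is not the base of a loop:
`v` is removed, and for every `e ∈ r⁻¹(v)` and `f ∈ s⁻¹(v)` an edge `[ef]`
from `s e` to `r f` is added. -/
def collapse (E : FinGraph) (v : E.V)
    (hnl : ∀ e : E.E, E.s e = v → E.r e ≠ v) : FinGraph where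
  V := {u : E.V // u ≠ v}
  E := {e : E.E // E.r e ≠ v ∧ E.s e ≠ v} ⊕ ({e : E.E // E.r e = v} × {f : E.E // E.s f = v})
  s := Sum.elim
    (fun e => ⟨E.s e.1, e.2.2⟩)
    (fun p => ⟨E.s p.1.1, fun h => (hnl p.1.1 h) p.1.2⟩)
  r := Sum.elim
    (fun e => ⟨E.r e.1, e.2.1⟩)
    (fun p => ⟨E.r p.2.1, hnl p.2.1 p.2.2⟩)

/-- The in-split graph of `E` at a vertex `v`, with respect to a partition of
`r⁻¹(v)` into `n` classes (encoded as a surjection `P : r⁻¹(v) → Fin n`). -/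
def inSplit (E : FinGraph) (v : E.V) (n : ℕ) (P : {e : E.E // E.r e = v} → Fin n) : FinGraph where
  V := {u : E.V // u ≠ v} ⊕ Fin n
  E := ({e : E.E // E.s e = v} × Fin n) ⊕ {f : E.E // E.s f ≠ v}
  s := Sum.elim (fun x => Sum.inr x.2) (fun f => Sum.inl ⟨E.s f.1, f.2⟩)
  r := Sum.elim
    (fun x => if h : E.r x.1.1 = v then Sum.inr (P ⟨x.1.1, h⟩) else Sum.inl ⟨E.r x.1.1, h⟩)
    (fun f => if h : E.r f.1 = v then Sum.inr (P ⟨f.1, h⟩) else Sum.inl ⟨E.r f.1, h⟩)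

/-- The out-split graph of `E` at a vertex `v`, with respect to a partition of
`s⁻¹(v)` into `n` classes (encoded as a surjection `P : s⁻¹(v) → Fin n`). -/
def outSplit (E : FinGraph) (v : E.V) (n : ℕ) (P : {e : E.E // E.s e = v} → Fin n) : FinGraph where
  V := {u : E.V // u ≠ v} ⊕ Fin n
  E := ({e : E.E // E.r e = v} × Fin n) ⊕ {f : E.E // E.r f ≠ v}
  r := Sum.elim (fun x => Sum.inr x.2) (fun f => Sum.inl ⟨E.r f.1, f.2⟩)
  s := Sum.elim
    (fun x => if h : E.s x.1.1 = v then Sum.inr (P ⟨x.1.1, h⟩) else Sum.inl ⟨E.s x.1.1, h⟩)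
    (fun f => if h : E.s f.1 = v then Sum.inr (P ⟨f.1, h⟩) else Sum.inl ⟨E.s f.1, h⟩)

/-- The source elimination graph `E \ v` at a source `v`. -/
def sourceElim (E : FinGraph) (v : E.V) (hsrc : E.IsSource v) : FinGraph where
  V := {u : E.V // u ≠ v}
  E := {e : E.E // E.s e ≠ v}
  s := fun e => ⟨E.s e.1, e.2⟩
  r := fun e => ⟨E.r e.1, fun h => hsrc e.1 h⟩

/-- A chain of source eliminations starting at `E`. -/
inductive ElimChain (E : FinGraph) : FinGraph → Type 1
  | refl : ElimChain E E
  | step {H : FinGraph} (c : ElimChain E H) (v : H.V) (hsrc : H.IsSource v) :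
      ElimChain E (H.sourceElim v hsrc)

/-- The canonical (injective) map from the vertices of the final graph of a
source elimination chain back into the vertices of the initial graph. -/
def ElimChain.vmap {E : FinGraph} : {F : FinGraph} → ElimChain E F → F.V → E.V
  | _, .refl, u => u
  | _, .step c _ _, u => c.vmap u.1

/-- A chain of collapses, each performed at a regular vertex which is not the
base of a loop. -/
inductive CollapseChain (E : FinGraph) : FinGraph → Prop
  | refl : CollapseChain E E
  | step {H : FinGraph} (c : CollapseChain E H) (v : H.V) (hreg : H.IsRegular v)
      (hnl : ∀ e : H.E, H.s e = v → H.r e ≠ v) :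
      CollapseChain E (H.collapse v hnl)

end FinGraph

/-! ## Leavitt path algebras -/

/-- Generators of the Leavitt path algebra: vertices, edges, and ghost edges. -/
inductive LPAGen (G : FinGraph) : Type
  | vert : G.V → LPAGen G
  | edge : G.E → LPAGen G
  | ghost : G.E → LPAGen G

/-- The defining relations of the Leavitt path algebra of a finite graph. -/
inductive LeavittRel (K : Type) [Field K] (G : FinGraph) :
    FreeAlgebra K (LPAGen G) → FreeAlgebra K (LPAGen G) → Prop
  | vertMul (v w : G.V) :
      LeavittRel K G (FreeAlgebra.ι K (LPAGen.vert v) * FreeAlgebra.ι K (LPAGen.vert w))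
        (if v = w then FreeAlgebra.ι K (LPAGen.vert v) else 0)
  | edgeLeft (e : G.E) :
      LeavittRel K G (FreeAlgebra.ι K (LPAGen.vert (G.s e)) * FreeAlgebra.ι K (LPAGen.edge e))
        (FreeAlgebra.ι K (LPAGen.edge e))
  | edgeRight (e : G.E) :
      LeavittRel K G (FreeAlgebra.ι K (LPAGen.edge e) * FreeAlgebra.ι K (LPAGen.vert (G.r e)))
        (FreeAlgebra.ι K (LPAGen.edge e))
  | ghostLeft (e : G.E) :
      LeavittRel K G (FreeAlgebra.ι K (LPAGen.vert (G.r e)) * FreeAlgebra.ι K (LPAGen.ghost e))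
        (FreeAlgebra.ι K (LPAGen.ghost e))
  | ghostRight (e : G.E) :
      LeavittRel K G (FreeAlgebra.ι K (LPAGen.ghost e) * FreeAlgebra.ι K (LPAGen.vert (G.s e)))
        (FreeAlgebra.ι K (LPAGen.ghost e))
  | ghostEdge (e f : G.E) :
      LeavittRel K G (FreeAlgebra.ι K (LPAGen.ghost e) * FreeAlgebra.ι K (LPAGen.edge f))
        (if e = f then FreeAlgebra.ι K (LPAGen.vert (G.r e)) else 0)
  | cuntzKrieger (v : G.V) (hv : G.IsRegular v) :
      LeavittRel K G (FreeAlgebra.ι K (LPAGen.vert v))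
        (∑ e ∈ Finset.univ.filter (fun e : G.E => G.s e = v),
          FreeAlgebra.ι K (LPAGen.edge e) * FreeAlgebra.ι K (LPAGen.ghost e))
  | unit :
      LeavittRel K G 1 (∑ v : G.V, FreeAlgebra.ι K (LPAGen.vert v))

/-- The Leavitt path algebra `L_K(G)` of a finite graph `G` with coefficients in
a field `K`. -/
abbrev LeavittPathAlgebra (K : Type) [Field K] (G : FinGraph) : Type :=
  RingQuot (LeavittRel K G)

namespace LeavittPathAlgebra

variable (K : Type) [Field K] (G : FinGraph)

/-- The image of a vertex in the Leavitt path algebra. -/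
def vert (v : G.V) : LeavittPathAlgebra K G :=
  RingQuot.mkAlgHom K (LeavittRel K G) (FreeAlgebra.ι K (LPAGen.vert v))

/-- The image of an edge in the Leavitt path algebra. -/
def edge (e : G.E) : LeavittPathAlgebra K G :=
  RingQuot.mkAlgHom K (LeavittRel K G) (FreeAlgebra.ι K (LPAGen.edge e))

/-- The image of a ghost edge in the Leavitt path algebra. -/
def ghost (e : G.E) : LeavittPathAlgebra K G :=
  RingQuot.mkAlgHom K (LeavittRel K G) (FreeAlgebra.ι K (LPAGen.ghost e))

end LeavittPathAlgebra

/-! ## Ring-theoretic notions -/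

/-- Two unital rings are Morita equivalent if their categories of left modules
are equivalent. -/
def MoritaEquivalent (R S : Type) [Ring R] [Ring S] : Prop :=
  Nonempty (ModuleCat.{0} R ≌ ModuleCat.{0} S)

/-- An idempotent `e` of a ring `R` is full if `R e R = R`, i.e. `1` is a finite
sum of elements of the form `a * e * b`. -/
def IsFullIdempotent {R : Type} [Ring R] (e : R) : Prop :=
  IsIdempotentElem e ∧ ∃ (n : ℕ) (a b : Fin n → R), (∑ i, a i * e * b i) = 1

/-- `S` is isomorphic, as a (nonunital) `K`-algebra, to the corner ring
`ε R ε = {x : R | ε * x * ε = x}` of `R`. -/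
def IsCornerIso (K : Type) [Field K] (S R : Type) [Ring S] [Ring R]
    [Algebra K S] [Algebra K R] (ε : R) : Prop :=
  ∃ φ : S →ₙₐ[K] R, Function.Injective φ ∧ Set.range φ = {x : R | ε * x * ε = x}

/-- A module `Q` is a generator for the category of left `R`-modules iff `R` is
an epimorphic image (equivalently, a direct summand) of a finite direct sum of
copies of `Q`. -/
def IsGenerator (R Q : Type) [Ring R] [AddCommGroup Q] [Module R Q] : Prop :=
  ∃ (n : ℕ) (f : (Fin n → Q) →ₗ[R] R), Function.Surjective f

/-! ### Leavitt path algebras and their universal property -/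

namespace LeavittPathAlgebra

section Basic

variable {K : Type} [Field K] {G : FinGraph}

theorem vert_mul_vert (v w : G.V) :
    vert K G v * vert K G w = if v = w then vert K G v else 0 := by
  have h := RingQuot.mkAlgHom_rel K (LeavittRel.vertMul (K := K) v w)
  rw [map_mul, apply_ite (RingQuot.mkAlgHom K (LeavittRel K G)), map_zero] at h
  exact h

theorem vert_mul_edge (e : G.E) : vert K G (G.s e) * edge K G e = edge K G e := by
  have h := RingQuot.mkAlgHom_rel K (LeavittRel.edgeLeft (K := K) e)
  rwa [map_mul] at h

theorem edge_mul_vert (e : G.E) : edge K G e * vert K G (G.r e) = edge K G e := by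
  have h := RingQuot.mkAlgHom_rel K (LeavittRel.edgeRight (K := K) e)
  rwa [map_mul] at h

theorem vert_mul_ghost (e : G.E) : vert K G (G.r e) * ghost K G e = ghost K G e := by
  have h := RingQuot.mkAlgHom_rel K (LeavittRel.ghostLeft (K := K) e)
  rwa [map_mul] at h

theorem ghost_mul_vert (e : G.E) : ghost K G e * vert K G (G.s e) = ghost K G e := by
  have h := RingQuot.mkAlgHom_rel K (LeavittRel.ghostRight (K := K) e)
  rwa [map_mul] at h

theorem ghost_mul_edge (e f : G.E) :
    ghost K G e * edge K G f = if e = f then vert K G (G.r e) else 0 := by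
  have h := RingQuot.mkAlgHom_rel K (LeavittRel.ghostEdge (K := K) e f)
  rw [map_mul, apply_ite (RingQuot.mkAlgHom K (LeavittRel K G)), map_zero] at h
  exact h

theorem vert_eq_sum (v : G.V) (hv : G.IsRegular v) :
    vert K G v = ∑ e ∈ Finset.univ.filter (fun e : G.E => G.s e = v),
      edge K G e * ghost K G e := by
  have h := RingQuot.mkAlgHom_rel K (LeavittRel.cuntzKrieger (K := K) v hv)
  rw [map_sum] at h
  simp only [map_mul] at h
  exact h

theorem one_eq_sum : (1 : LeavittPathAlgebra K G) = ∑ v : G.V, vert K G v := by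
  have h := RingQuot.mkAlgHom_rel K (LeavittRel.unit (K := K) (G := G))
  rwa [map_sum, map_one] at h

/-- To prove a property of all elements of `L_K(G)` it suffices to treat vertices, edges and
ghost edges; no clause for scalars is needed because `1` is the sum of the vertices. -/
theorem induction {P : LeavittPathAlgebra K G → Prop}
    (hv : ∀ v, P (vert K G v)) (he : ∀ e, P (edge K G e)) (hg : ∀ e, P (ghost K G e))
    (h0 : P 0) (hadd : ∀ x y, P x → P y → P (x + y)) (hmul : ∀ x y, P x → P y → P (x * y))
    (hsmul : ∀ (c : K) x, P x → P (c • x)) (x : LeavittPathAlgebra K G) : P x := by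
  have h1 : P 1 := by
    rw [one_eq_sum]
    exact Finset.sum_induction _ P hadd h0 fun v _ => hv v
  obtain ⟨y, rfl⟩ := RingQuot.mkAlgHom_surjective K (LeavittRel K G) x
  induction y using FreeAlgebra.induction with
  | grade0 c =>
    rw [AlgHom.commutes, Algebra.algebraMap_eq_smul_one]
    exact hsmul c _ h1
  | grade1 g =>
    cases g with
    | vert v => exact hv v
    | edge e => exact he e
    | ghost e => exact hg e
  | mul a b ha hb => rw [map_mul]; exact hmul _ _ ha hb
  | add a b ha hb => rw [map_add]; exact hadd _ _ ha hb

theorem nonUnitalHom_eq {Q : Type} [Ring Q] [Algebra K Q]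
    {φ ψ : LeavittPathAlgebra K G →ₙₐ[K] Q} (hv : ∀ v, φ (vert K G v) = ψ (vert K G v))
    (he : ∀ e, φ (edge K G e) = ψ (edge K G e)) (hg : ∀ e, φ (ghost K G e) = ψ (ghost K G e))
    (x : LeavittPathAlgebra K G) : φ x = ψ x := by
  induction x using induction with
  | hv v => exact hv v
  | he e => exact he e
  | hg e => exact hg e
  | h0 => simp
  | hadd x y hx hy => simp [hx, hy]
  | hmul x y hx hy => simp [hx, hy]
  | hsmul c x hx => simp [hx]

end Basic

/-- A family of elements of a `K`-algebra `Q` satisfying the relations of `L_K(G)`, except that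
the vertices need not add up to `1`. -/
structure Family (G : FinGraph) (Q : Type) [Ring Q] where
  v : G.V → Q
  e : G.E → Q
  g : G.E → Q
  v_mul_v : ∀ a b, v a * v b = if a = b then v a else 0
  v_mul_e : ∀ a, v (G.s a) * e a = e a
  e_mul_v : ∀ a, e a * v (G.r a) = e a
  v_mul_g : ∀ a, v (G.r a) * g a = g a
  g_mul_v : ∀ a, g a * v (G.s a) = g a
  g_mul_e : ∀ a b, g a * e b = if a = b then v (G.r a) else 0
  ck : ∀ a, G.IsRegular a → v a = ∑ b ∈ Finset.univ.filter (fun b : G.E => G.s b = a), e b * g b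

/-- A corner of a `K`-algebra is a `K`-algebra, with the idempotent as its identity. -/
@[reducible]
noncomputable def cornerAlgebra (K : Type) [Field K] {Q : Type} [Ring Q] [Algebra K Q] {ε : Q}
    (h : IsIdempotentElem ε) : Algebra K h.Corner :=
  RingHom.toAlgebra'
    { toFun := fun c => ⟨c • ε, c • ε, by simp [h.eq]⟩
      map_one' := Subtype.ext (one_smul _ _)
      map_mul' := fun a b => Subtype.ext (by
        change (a * b) • ε = (a • ε) * (b • ε)
        rw [smul_mul_smul_comm, h.eq])
      map_zero' := Subtype.ext (zero_smul _ _)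
      map_add' := fun a b => Subtype.ext (add_smul _ _ _) }
    (fun c x => Subtype.ext (by
      obtain ⟨h1, h2⟩ := (Subsemigroup.mem_corner_iff h).mp x.2
      change (c • ε) * x.1 = x.1 * (c • ε)
      rw [smul_mul_assoc, mul_smul_comm, h1, h2]))

/-- Universal property of `L_K(G)` for non-unital homomorphisms: the algebra is mapped into the
corner determined by the sum of the vertices of the family. -/
theorem Family.exists_lift {K : Type} [Field K] {G : FinGraph} {Q : Type} [Ring Q] [Algebra K Q]
    (f : Family G Q) : ∃ φ : LeavittPathAlgebra K G →ₙₐ[K] Q,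
      (∀ v, φ (vert K G v) = f.v v) ∧ (∀ e, φ (edge K G e) = f.e e) ∧
      (∀ e, φ (ghost K G e) = f.g e) := by
  set ε : Q := ∑ v, f.v v with hε
  have hl : ∀ v, ε * f.v v = f.v v := fun v => by simp [hε, Finset.sum_mul, f.v_mul_v]
  have hr : ∀ v, f.v v * ε = f.v v := fun v => by simp [hε, Finset.mul_sum, f.v_mul_v]
  have h : IsIdempotentElem ε := by
    rw [IsIdempotentElem]; nth_rw 2 3 [hε]; rw [Finset.mul_sum]; simp [hl]
  have mem : ∀ {x : Q}, ε * x = x → x * ε = x → x ∈ Subsemigroup.corner ε := fun h1 h2 =>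
    (Subsemigroup.mem_corner_iff h).mpr ⟨h1, h2⟩
  have hel : ∀ e, ε * f.e e = f.e e := fun e => by rw [← f.v_mul_e, ← mul_assoc, hl]
  have her : ∀ e, f.e e * ε = f.e e := fun e => by rw [← f.e_mul_v, mul_assoc, hr]
  have hgl : ∀ e, ε * f.g e = f.g e := fun e => by rw [← f.v_mul_g, ← mul_assoc, hl]
  have hgr : ∀ e, f.g e * ε = f.g e := fun e => by rw [← f.g_mul_v, mul_assoc, hr]
  let _ := cornerAlgebra K h
  let V : G.V → h.Corner := fun v => ⟨f.v v, mem (hl v) (hr v)⟩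
  let X : G.E → h.Corner := fun e => ⟨f.e e, mem (hel e) (her e)⟩
  let Y : G.E → h.Corner := fun e => ⟨f.g e, mem (hgl e) (hgr e)⟩
  let incl : h.Corner →ₙₐ[K] Q :=
    { toFun := fun x => x.1
      map_smul' := fun c x => by
        obtain ⟨h1, h2⟩ := (Subsemigroup.mem_corner_iff h).mp x.2
        rw [Algebra.smul_def]
        change (c • ε) * x.1 = c • x.1
        rw [smul_mul_assoc, h1]
      map_zero' := rfl
      map_add' := fun _ _ => rfl
      map_mul' := fun _ _ => rfl }
  have incl_inj : Function.Injective incl := Subtype.val_injective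
  let gen : LPAGen G → h.Corner := fun x => match x with
    | .vert v => V v
    | .edge e => X e
    | .ghost e => Y e
  have iv : ∀ v, incl (gen (.vert v)) = f.v v := fun _ => rfl
  have ie : ∀ e, incl (gen (.edge e)) = f.e e := fun _ => rfl
  have ig : ∀ e, incl (gen (.ghost e)) = f.g e := fun _ => rfl
  have i1 : incl 1 = ε := rfl
  have hrel : ∀ ⦃x y⦄, LeavittRel K G x y →
      FreeAlgebra.lift K gen x = FreeAlgebra.lift K gen y := by
    intro x y hxy
    apply incl_inj
    induction hxy with
    | vertMul v w =>
      rw [apply_ite (FreeAlgebra.lift K gen), apply_ite incl]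
      simpa [iv, ie, ig] using f.v_mul_v v w
    | edgeLeft e => simpa [iv, ie, ig] using f.v_mul_e e
    | edgeRight e => simpa [iv, ie, ig] using f.e_mul_v e
    | ghostLeft e => simpa [iv, ie, ig] using f.v_mul_g e
    | ghostRight e => simpa [iv, ie, ig] using f.g_mul_v e
    | ghostEdge e e' =>
      rw [apply_ite (FreeAlgebra.lift K gen), apply_ite incl]
      simpa [iv, ie, ig] using f.g_mul_e e e'
    | cuntzKrieger v hv => simpa [iv, ie, ig, i1, map_sum] using f.ck v hv
    | unit => simpa [iv, ie, ig, i1, map_sum] using hε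
  let Φ : LeavittPathAlgebra K G →ₐ[K] h.Corner :=
    RingQuot.liftAlgHom K ⟨FreeAlgebra.lift K gen, hrel⟩
  have hΦ : ∀ x, Φ (RingQuot.mkAlgHom K _ (FreeAlgebra.ι K x)) = gen x := fun x => by
    simp [Φ]
  refine ⟨incl.comp (Φ : LeavittPathAlgebra K G →ₙₐ[K] h.Corner), fun v => ?_, fun e => ?_,
    fun e => ?_⟩
  · exact congrArg incl (hΦ (.vert v))
  · exact congrArg incl (hΦ (.edge e))
  · exact congrArg incl (hΦ (.ghost e))

end LeavittPathAlgebra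

/-! ### Full corners of matrix algebras -/

/-- A full element: `1` is a finite sum of terms `a * p * b`, the index type being arbitrary but
nonempty. -/
def IsFull {R : Type} [Ring R] (p : R) : Prop :=
  ∃ (α : Type) (_ : Fintype α) (_ : Nonempty α) (a b : α → R), ∑ i, a i * p * b i = 1

/-- The homomorphism `φ` identifies `S` with the corner of `R` cut out by the full idempotent
`φ 1`. -/
structure IsFullCornerEmb {K : Type} [Field K] {S R : Type} [Ring S] [Ring R] [Algebra K S]
    [Algebra K R] (φ : S →ₙₐ[K] R) : Prop where
  inj : Function.Injective φ
  surj : ∀ x, φ 1 * x * φ 1 = x → ∃ s, φ s = x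
  full : IsFull (φ 1)

/-- `S` is isomorphic to a full corner of a matrix algebra of positive size over `R`. -/
def IsMatrixCorner (K : Type) [Field K] (S R : Type) [Ring S] [Ring R] [Algebra K S]
    [Algebra K R] : Prop :=
  ∃ (ι : Type) (_ : Fintype ι) (_ : DecidableEq ι) (_ : Nonempty ι)
    (φ : S →ₙₐ[K] Matrix ι ι R), IsFullCornerEmb φ

section Corner

variable {K : Type} [Field K] {S R T : Type} [Ring S] [Ring R] [Ring T]
  [Algebra K S] [Algebra K R] [Algebra K T]

theorem nonUnitalHom_one_mul (φ : S →ₙₐ[K] R) (s : S) : φ 1 * φ s = φ s := by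
  rw [← map_mul, one_mul]

theorem nonUnitalHom_mul_one (φ : S →ₙₐ[K] R) (s : S) : φ s * φ 1 = φ s := by
  rw [← map_mul, mul_one]

theorem IsFullCornerEmb.comp {ψ : R →ₙₐ[K] T} {φ : S →ₙₐ[K] R} (hψ : IsFullCornerEmb ψ)
    (hφ : IsFullCornerEmb φ) : IsFullCornerEmb (ψ.comp φ) where
  inj := by
    intro x y h
    exact hφ.inj (hψ.inj h)
  surj := by
    intro x hx
    simp only [NonUnitalAlgHom.comp_apply] at hx ⊢
    obtain ⟨y, rfl⟩ := hψ.surj x (by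
      rw [← hx]
      simp only [← mul_assoc, nonUnitalHom_one_mul]
      simp only [mul_assoc, nonUnitalHom_mul_one])
    obtain ⟨s, rfl⟩ := hφ.surj y (hψ.inj (by simpa using hx))
    exact ⟨s, rfl⟩
  full := by
    obtain ⟨α, _, _, a, b, h⟩ := hφ.full
    obtain ⟨β, _, _, c, d, h'⟩ := hψ.full
    refine ⟨β × α, inferInstance, inferInstance, fun i => c i.1 * ψ (a i.2),
      fun i => ψ (b i.2) * d i.1, ?_⟩
    rw [← h', ← h, Fintype.sum_prod_type]
    refine Finset.sum_congr rfl fun i _ => ?_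
    simp only [map_sum, map_mul, Finset.mul_sum, Finset.sum_mul, NonUnitalAlgHom.comp_apply,
      mul_assoc]

theorem isFullCornerEmb_algEquiv (f : S ≃ₐ[K] R) :
    IsFullCornerEmb ((f : S →ₐ[K] R) : S →ₙₐ[K] R) where
  inj := f.injective
  surj x _ := f.surjective x
  full := ⟨Unit, inferInstance, inferInstance, 1, 1, by
    have h : ((f : S →ₐ[K] R) : S →ₙₐ[K] R) 1 = 1 := map_one f
    simp [h]⟩

/-- Entrywise application of a non-unital homomorphism. -/
def nonUnitalMapMatrix (ι : Type) [Fintype ι] (φ : S →ₙₐ[K] R) :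
    Matrix ι ι S →ₙₐ[K] Matrix ι ι R where
  toFun M := M.map φ
  map_smul' c M := by ext; simp
  map_zero' := by ext; simp
  map_add' M N := by ext; simp
  map_mul' M N := by ext; simp [Matrix.mul_apply]

theorem nonUnitalMapMatrix_one (ι : Type) [Fintype ι] [DecidableEq ι] (φ : S →ₙₐ[K] R) :
    nonUnitalMapMatrix ι φ 1 = Matrix.diagonal fun _ => φ 1 := by
  ext i j
  simp only [nonUnitalMapMatrix, Matrix.diagonal_apply]
  by_cases h : i = j <;> simp [h]

theorem IsFullCornerEmb.mapMatrix (ι : Type) [Fintype ι] [DecidableEq ι] {φ : S →ₙₐ[K] R}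
    (hφ : IsFullCornerEmb φ) : IsFullCornerEmb (nonUnitalMapMatrix ι φ) where
  inj := Matrix.map_injective hφ.inj
  surj := by
    intro x hx
    rw [nonUnitalMapMatrix_one] at hx
    have : ∀ i j, ∃ s, φ s = x i j := fun i j => hφ.surj _ (by
      conv_rhs => rw [← hx]
      simp)
    choose M hM using this
    exact ⟨Matrix.of M, by ext i j; exact hM i j⟩
  full := by
    obtain ⟨α, _, _, a, b, h⟩ := hφ.full
    refine ⟨α, inferInstance, inferInstance, fun i => Matrix.diagonal fun _ => a i,
      fun i => Matrix.diagonal fun _ => b i, ?_⟩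
    rw [nonUnitalMapMatrix_one]
    simp only [Matrix.diagonal_mul_diagonal]
    ext i j
    rw [Matrix.sum_apply, Matrix.one_apply]
    by_cases hij : i = j <;> simp [hij, h]

theorem IsMatrixCorner.trans (h : IsMatrixCorner K S R) (h' : IsMatrixCorner K R T) :
    IsMatrixCorner K S T := by
  obtain ⟨ι, _, _, _, φ, hφ⟩ := h
  obtain ⟨κ, _, _, _, ψ, hψ⟩ := h'
  exact ⟨ι × κ, inferInstance, inferInstance, inferInstance, _,
    (isFullCornerEmb_algEquiv (Matrix.compAlgEquiv ι κ T K)).comp ((hψ.mapMatrix ι).comp hφ)⟩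

theorem IsMatrixCorner.of_algEquiv (f : S ≃ₐ[K] R) : IsMatrixCorner K S R :=
  ⟨Unit, inferInstance, inferInstance, inferInstance, _,
    (isFullCornerEmb_algEquiv (Matrix.uniqueAlgEquiv (m := Unit) (R := K) (A := R)).symm).comp
      (isFullCornerEmb_algEquiv f)⟩

/-- If `S` is the full corner `ε R ε` with `1 = ∑ i, a i * ε * b i`, then conversely `R` is a full
corner of a matrix algebra over `S`, through `r ↦ (ε * b i * r * a j * ε)`. -/
theorem IsFullCornerEmb.isMatrixCorner {θ : S →ₙₐ[K] R} (hθ : IsFullCornerEmb θ) :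
    IsMatrixCorner K R S := by
  classical
  obtain ⟨α, _, _, a, b, hab⟩ := hθ.full
  have hε : θ 1 * θ 1 = θ 1 := nonUnitalHom_one_mul θ 1
  have hex : ∀ r, ∃ s, θ s = θ 1 * r * θ 1 := fun r => hθ.surj _ (by
    simp only [← mul_assoc, hε]
    simp only [mul_assoc, hε])
  choose ρ hρ using hex
  let φ : R →ₙₐ[K] Matrix α α S :=
    { toFun := fun r => Matrix.of fun i j => ρ (b i * r * a j)
      map_smul' := fun c r => by
        ext i j
        apply hθ.inj
        simp [hρ]
      map_zero' := by
        ext i j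
        apply hθ.inj
        simp [hρ]
      map_add' := fun r r' => by
        ext i j
        apply hθ.inj
        simp [hρ, mul_add, add_mul]
      map_mul' := fun r r' => by
        ext i j
        apply hθ.inj
        simp only [Matrix.of_apply, Matrix.mul_apply, map_sum, map_mul, hρ]
        calc θ 1 * (b i * (r * r') * a j) * θ 1
            = θ 1 * b i * r * 1 * r' * a j * θ 1 := by simp only [mul_assoc, one_mul]
          _ = _ := by
            rw [← hab, Finset.mul_sum, Finset.sum_mul, Finset.sum_mul, Finset.sum_mul]
            refine Finset.sum_congr rfl fun k _ => ?_
            conv_lhs => rw [← hε]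
            simp only [mul_assoc]
            simp only [← mul_assoc, hε] }
  have hφ : ∀ r i j, θ (φ r i j) = θ 1 * (b i * r * a j) * θ 1 := fun r i j => hρ _
  -- an element is recovered from the matrix of its compressions
  have hrec : ∀ r, ∑ i, ∑ j, a i * θ (φ r i j) * b j = r := fun r => by
    calc _ = (∑ i, a i * θ 1 * b i) * r * (∑ j, a j * θ 1 * b j) := by
          simp only [Finset.sum_mul, Finset.mul_sum, hφ]
          rw [Finset.sum_comm]
          simp only [mul_assoc]
      _ = r := by rw [hab, one_mul, mul_one]
  refine ⟨α, inferInstance, inferInstance, inferInstance, φ, ?_, ?_, ?_⟩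
  · intro r r' h
    rw [← hrec r, ← hrec r', h]
  · intro M hM
    refine ⟨∑ j, ∑ k, a j * θ (M j k) * b k, ?_⟩
    ext i l
    apply hθ.inj
    conv_rhs => rw [← hM]
    rw [hφ]
    simp only [Matrix.mul_apply, map_sum, map_mul, hφ, Finset.mul_sum, Finset.sum_mul, mul_one]
    rw [Finset.sum_comm]
    refine Finset.sum_congr rfl fun k _ => Finset.sum_congr rfl fun j _ => ?_
    calc _ = θ 1 * b i * a j * θ (M j k) * b k * a l * θ 1 := by simp only [mul_assoc]
      _ = θ 1 * b i * a j * (θ 1 * θ (M j k) * θ 1) * b k * a l * θ 1 := by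
        rw [nonUnitalHom_one_mul, nonUnitalHom_mul_one]
      _ = _ := by simp only [mul_assoc]
  · refine ⟨α × α × α, inferInstance, inferInstance,
      fun x => Matrix.single x.1 x.2.1 (ρ (a x.2.1)),
      fun x => Matrix.single x.2.2 x.1 (ρ (b x.2.2)), ?_⟩
    have key : ∑ i, ∑ j, ρ (a i) * φ 1 i j * ρ (b j) = 1 := by
      apply hθ.inj
      simp only [map_sum, map_mul, hφ, hρ]
      calc _ = θ 1 * (∑ i, a i * θ 1 * b i) * (∑ j, a j * θ 1 * b j) * θ 1 := by
            simp only [Finset.sum_mul, Finset.mul_sum]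
            rw [Finset.sum_comm]
            refine Finset.sum_congr rfl fun k _ => Finset.sum_congr rfl fun j _ => ?_
            simp only [mul_one]
            conv_rhs => rw [← hε]
            simp only [mul_assoc]
            simp only [← mul_assoc, hε]
        _ = θ 1 := by rw [hab, mul_one, mul_one, hε]
    have hk : ∀ k : α, ∑ i, ∑ j, Matrix.single k k (ρ (a i) * φ 1 i j * ρ (b j)) =
        Matrix.single k k (1 : S) := fun k => by
      have := congrArg (Matrix.singleAddMonoidHom k k) key
      simp only [map_sum] at this
      exact this
    simp only [Fintype.sum_prod_type, Matrix.single_mul_mul_single]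
    rw [Finset.sum_congr rfl fun k _ => hk k]
    exact Matrix.sum_single_one

end Corner

/-! ### Two families attached to a collapse -/

namespace FinGraph

variable (H : FinGraph) (v : H.V) (hnl : ∀ e : H.E, H.s e = v → H.r e ≠ v)

/-- A sum over the edges leaving `u` in the collapse at `v` is the sum over the edges leaving `u`
in `H`, where an edge `e` into `v` stands for all the edges `[ef]`. -/
theorem sum_collapse {M : Type} [AddCommMonoid M] (A : (H.collapse v hnl).E → M) (B : H.E → M)
    (h₁ : ∀ e, A (Sum.inl e) = B e.1) (h₂ : ∀ e, ∑ f, A (Sum.inr (e, f)) = B e.1)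
    (u : (H.collapse v hnl).V) :
    ∑ x ∈ Finset.univ.filter (fun x => (H.collapse v hnl).s x = u), A x =
      ∑ e ∈ Finset.univ.filter (fun e => H.s e = u.1), B e := by
  rw [Finset.sum_filter, Finset.sum_filter]
  have hs₁ : ∀ e, (H.collapse v hnl).s (Sum.inl e) = u ↔ H.s e.1 = u.1 := fun e =>
    Subtype.ext_iff
  have hs₂ : ∀ e, (H.collapse v hnl).s (Sum.inr e) = u ↔ H.s e.1.1 = u.1 := fun e =>
    Subtype.ext_iff
  have hsum : ∀ C : (H.collapse v hnl).E → M, ∑ x, C x =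
      (∑ x : {e : H.E // H.r e ≠ v ∧ H.s e ≠ v}, C (Sum.inl x)) +
      ∑ x : {e : H.E // H.r e = v}, ∑ y : {f : H.E // H.s f = v}, C (Sum.inr (x, y)) :=
    fun C => (Fintype.sum_sum_type C).trans (by rw [Fintype.sum_prod_type])
  rw [hsum]
  simp only [hs₁, hs₂, h₁]
  have h3 : ∀ x : {e : H.E // H.r e = v},
      (∑ y : {f : H.E // H.s f = v}, if H.s x.1 = u.1 then A (Sum.inr (x, y)) else 0) =
      if H.s x.1 = u.1 then B x.1 else 0 := fun x => by
    split_ifs with h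
    · exact h₂ x
    · simp
  rw [Finset.sum_congr rfl fun x _ => h3 x]
  rw [← Finset.sum_subtype (Finset.univ.filter fun e => H.r e ≠ v ∧ H.s e ≠ v) (by simp)
      (fun e => if H.s e = u.1 then B e else 0),
    ← Finset.sum_subtype (Finset.univ.filter fun e => H.r e = v) (by simp)
      (fun e => if H.s e = u.1 then B e else 0), Finset.sum_filter, Finset.sum_filter,
    ← Finset.sum_add_distrib]
  refine Finset.sum_congr rfl fun e _ => ?_
  by_cases hr : H.r e = v
  · simp [hr]
  · by_cases hs : H.s e = v
    · have : v ≠ u.1 := fun h => u.2 h.symm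
      simp [hr, hs, this]
    · simp [hr, hs]

end FinGraph

namespace LeavittPathAlgebra

section Mul

variable {K : Type} [Field K] {G : FinGraph}

theorem vert_mul_vert_of_ne {v w : G.V} (h : v ≠ w) : vert K G v * vert K G w = 0 := by
  rw [vert_mul_vert, if_neg h]

theorem vert_mul_self (v : G.V) : vert K G v * vert K G v = vert K G v := by
  rw [vert_mul_vert, if_pos rfl]

theorem ghost_mul_edge_of_ne {e f : G.E} (h : e ≠ f) : ghost K G e * edge K G f = 0 := by
  rw [ghost_mul_edge, if_neg h]

theorem ghost_mul_edge_self (e : G.E) : ghost K G e * edge K G e = vert K G (G.r e) := by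
  rw [ghost_mul_edge, if_pos rfl]

theorem vert_mul_edge' {e : G.E} {v : G.V} (h : G.s e = v) :
    vert K G v * edge K G e = edge K G e := h ▸ vert_mul_edge e

theorem edge_mul_vert' {e : G.E} {v : G.V} (h : G.r e = v) :
    edge K G e * vert K G v = edge K G e := h ▸ edge_mul_vert e

theorem vert_mul_ghost' {e : G.E} {v : G.V} (h : G.r e = v) :
    vert K G v * ghost K G e = ghost K G e := h ▸ vert_mul_ghost e

theorem ghost_mul_vert' {e : G.E} {v : G.V} (h : G.s e = v) :
    ghost K G e * vert K G v = ghost K G e := h ▸ ghost_mul_vert e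

end Mul

/-- A form of `if_congr` which takes the decidability instances by unification. -/
theorem ite_congr_iff {α : Type} {p q : Prop} {hp : Decidable p} {hq : Decidable q} {x y x' y' : α}
    (h : p ↔ q) (hx : x = x') (hy : y = y') :
    @ite α p hp x y = @ite α q hq x' y' := by
  subst hx hy
  by_cases hq' : q
  · rw [if_pos (h.mpr hq'), if_pos hq']
  · rw [if_neg (fun hp' => hq' (h.mp hp')), if_neg hq']

section Collapse

variable (K : Type) [Field K] (H : FinGraph) (v : H.V)
  (hnl : ∀ e : H.E, H.s e = v → H.r e ≠ v)

theorem vert_eq_sum_subtype (hreg : H.IsRegular v) :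
    vert K H v = ∑ f : {f : H.E // H.s f = v}, edge K H f.1 * ghost K H f.1 := by
  rw [vert_eq_sum v hreg]
  exact Finset.sum_subtype _ (by simp) (fun f => edge K H f * ghost K H f)

/-- The family in `L_K(H)` defining the inclusion of the Leavitt path algebra of the collapse
at `v`: the edge `[ef]` goes to the product `ef`. -/
noncomputable def collapseFamily (hreg : H.IsRegular v) :
    Family (H.collapse v hnl) (LeavittPathAlgebra K H) where
  v u := vert K H u.1
  e := Sum.elim (fun e => edge K H e.1) (fun p => edge K H p.1.1 * edge K H p.2.1)
  g := Sum.elim (fun e => ghost K H e.1) (fun p => ghost K H p.2.1 * ghost K H p.1.1)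
  v_mul_v a b := by
    rw [vert_mul_vert]
    exact ite_congr_iff Subtype.ext_iff.symm rfl rfl
  v_mul_e := by
    rintro (a | a)
    · exact vert_mul_edge _
    · change vert K H (H.s a.1.1) * (edge K H a.1.1 * edge K H a.2.1) = _
      rw [← mul_assoc, vert_mul_edge]; rfl
  e_mul_v := by
    rintro (a | a)
    · exact edge_mul_vert _
    · change (edge K H a.1.1 * edge K H a.2.1) * vert K H (H.r a.2.1) = _
      rw [mul_assoc, edge_mul_vert]; rfl
  v_mul_g := by
    rintro (a | a)
    · exact vert_mul_ghost _
    · change vert K H (H.r a.2.1) * (ghost K H a.2.1 * ghost K H a.1.1) = _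
      rw [← mul_assoc, vert_mul_ghost]; rfl
  g_mul_v := by
    rintro (a | a)
    · exact ghost_mul_vert _
    · change (ghost K H a.2.1 * ghost K H a.1.1) * vert K H (H.s a.1.1) = _
      rw [mul_assoc, ghost_mul_vert]; rfl
  g_mul_e := by
    rintro (a | a) (b | b)
    · change ghost K H a.1 * edge K H b.1 = _
      rw [ghost_mul_edge]
      exact ite_congr_iff (Subtype.ext_iff.symm.trans Sum.inl_injective.eq_iff.symm) rfl rfl
    · change ghost K H a.1 * (edge K H b.1.1 * edge K H b.2.1) = _
      have h : a.1 ≠ b.1.1 := fun h => a.2.1 (h ▸ b.1.2)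
      rw [← mul_assoc, ghost_mul_edge_of_ne h, zero_mul, if_neg (by simp)]
    · change (ghost K H a.2.1 * ghost K H a.1.1) * edge K H b.1 = _
      have h : a.1.1 ≠ b.1 := fun h => b.2.1 (h ▸ a.1.2)
      rw [mul_assoc, ghost_mul_edge_of_ne h, mul_zero, if_neg (by simp)]
    · change (ghost K H a.2.1 * ghost K H a.1.1) * (edge K H b.1.1 * edge K H b.2.1) = _
      rw [mul_assoc, ← mul_assoc (ghost K H a.1.1)]
      by_cases h : a.1 = b.1
      · rw [← h, ghost_mul_edge_self, vert_mul_edge' (b.2.2.trans a.1.2.symm), ghost_mul_edge]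
        refine ite_congr_iff ?_ rfl rfl
        refine Iff.trans ?_ Sum.inr_injective.eq_iff.symm
        rw [Prod.ext_iff, Subtype.ext_iff (a1 := a.2)]
        exact ⟨fun h' => ⟨h, h'⟩, fun h' => h'.2⟩
      · rw [ghost_mul_edge_of_ne (fun h' => h (Subtype.ext h')), zero_mul, mul_zero, if_neg]
        exact fun h' => h (congrArg Prod.fst (Sum.inr_injective h'))
  ck u hu := by
    have hu' : H.IsRegular u.1 := by
      obtain ⟨e | e, he⟩ := hu
      · exact ⟨e.1, congrArg Subtype.val he⟩
      · exact ⟨e.1.1, congrArg Subtype.val he⟩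
    rw [vert_eq_sum _ hu']
    refine (H.sum_collapse v hnl _ _ (fun e => rfl) (fun e => ?_) u).symm
    calc _ = edge K H e.1 * (∑ f : {f : H.E // H.s f = v}, edge K H f.1 * ghost K H f.1) *
          ghost K H e.1 := by
          simp only [Finset.mul_sum, Finset.sum_mul, Sum.elim_inr, mul_assoc]
      _ = _ := by rw [← vert_eq_sum_subtype K H v hreg, edge_mul_vert' e.2]

theorem single_mul_single_ite {ι R : Type} [Fintype ι] [DecidableEq ι] [Ring R] (i j k l : ι)
    (a b : R) : Matrix.single i j a * Matrix.single k l b =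
      if j = k then Matrix.single i l (a * b) else 0 := by
  split_ifs with h
  · subst h; rw [Matrix.single_mul_single_same]
  · exact Matrix.single_mul_single_of_ne _ _ _ _ h _

/-- The vertex `u ≠ v` in the Leavitt path algebra of the collapse at `v`. -/
noncomputable def cV (u : H.V) (h : u ≠ v) : LeavittPathAlgebra K (H.collapse v hnl) :=
  vert K (H.collapse v hnl) ⟨u, h⟩

/-- An edge avoiding `v`, in the Leavitt path algebra of the collapse at `v`. -/
noncomputable def cE (a : H.E) (hr : H.r a ≠ v) (hs : H.s a ≠ v) :
    LeavittPathAlgebra K (H.collapse v hnl) :=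
  edge K (H.collapse v hnl) (Sum.inl ⟨a, hr, hs⟩)

/-- The ghost edge belonging to `cE`. -/
noncomputable def cG (a : H.E) (hr : H.r a ≠ v) (hs : H.s a ≠ v) :
    LeavittPathAlgebra K (H.collapse v hnl) :=
  ghost K (H.collapse v hnl) (Sum.inl ⟨a, hr, hs⟩)

/-- The edge `[af]` in the Leavitt path algebra of the collapse at `v`. -/
noncomputable def cE2 (a : H.E) (hr : H.r a = v) (f : {f : H.E // H.s f = v}) :
    LeavittPathAlgebra K (H.collapse v hnl) :=
  edge K (H.collapse v hnl) (Sum.inr (⟨a, hr⟩, f))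

/-- The ghost edge belonging to `cE2`. -/
noncomputable def cG2 (a : H.E) (hr : H.r a = v) (f : {f : H.E // H.s f = v}) :
    LeavittPathAlgebra K (H.collapse v hnl) :=
  ghost K (H.collapse v hnl) (Sum.inr (⟨a, hr⟩, f))

section

variable {K H v hnl}

theorem cV_mul_cV {a b : H.V} (ha : a ≠ v) (hb : b ≠ v) :
    cV K H v hnl a ha * cV K H v hnl b hb = if a = b then cV K H v hnl a ha else 0 :=
  (vert_mul_vert _ _).trans (ite_congr_iff Subtype.ext_iff rfl rfl)

theorem cV_mul_self {a : H.V} (ha : a ≠ v) :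
    cV K H v hnl a ha * cV K H v hnl a ha = cV K H v hnl a ha :=
  vert_mul_self _

theorem cV_mul_cE {a : H.E} (hr : H.r a ≠ v) (hs : H.s a ≠ v) :
    cV K H v hnl (H.s a) hs * cE K H v hnl a hr hs = cE K H v hnl a hr hs :=
  vert_mul_edge' rfl

theorem cE_mul_cV {a : H.E} (hr : H.r a ≠ v) (hs : H.s a ≠ v) :
    cE K H v hnl a hr hs * cV K H v hnl (H.r a) hr = cE K H v hnl a hr hs :=
  edge_mul_vert' rfl

theorem cV_mul_cG {a : H.E} (hr : H.r a ≠ v) (hs : H.s a ≠ v) :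
    cV K H v hnl (H.r a) hr * cG K H v hnl a hr hs = cG K H v hnl a hr hs :=
  vert_mul_ghost' rfl

theorem cG_mul_cV {a : H.E} (hr : H.r a ≠ v) (hs : H.s a ≠ v) :
    cG K H v hnl a hr hs * cV K H v hnl (H.s a) hs = cG K H v hnl a hr hs :=
  ghost_mul_vert' rfl

theorem cV_mul_cE2 {a : H.E} (hr : H.r a = v) (hs : H.s a ≠ v) (f : {f : H.E // H.s f = v}) :
    cV K H v hnl (H.s a) hs * cE2 K H v hnl a hr f = cE2 K H v hnl a hr f :=
  vert_mul_edge' rfl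

theorem cE2_mul_cV {a : H.E} (hr : H.r a = v) (f : {f : H.E // H.s f = v}) (hf : H.r f.1 ≠ v) :
    cE2 K H v hnl a hr f * cV K H v hnl (H.r f.1) hf = cE2 K H v hnl a hr f :=
  edge_mul_vert' rfl

theorem cV_mul_cG2 {a : H.E} (hr : H.r a = v) (f : {f : H.E // H.s f = v}) (hf : H.r f.1 ≠ v) :
    cV K H v hnl (H.r f.1) hf * cG2 K H v hnl a hr f = cG2 K H v hnl a hr f :=
  vert_mul_ghost' rfl

theorem cG2_mul_cV {a : H.E} (hr : H.r a = v) (hs : H.s a ≠ v) (f : {f : H.E // H.s f = v}) :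
    cG2 K H v hnl a hr f * cV K H v hnl (H.s a) hs = cG2 K H v hnl a hr f :=
  ghost_mul_vert' rfl

theorem cG_mul_cE {a b : H.E} (hr : H.r a ≠ v) (hs : H.s a ≠ v) (hr' : H.r b ≠ v)
    (hs' : H.s b ≠ v) : cG K H v hnl a hr hs * cE K H v hnl b hr' hs' =
      if a = b then cV K H v hnl (H.r a) hr else 0 :=
  (ghost_mul_edge _ _).trans (ite_congr_iff (Sum.inl_injective.eq_iff.trans Subtype.ext_iff) rfl rfl)

theorem cG_mul_cE2 {a b : H.E} (hr : H.r a ≠ v) (hs : H.s a ≠ v) (hr' : H.r b = v)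
    (f : {f : H.E // H.s f = v}) : cG K H v hnl a hr hs * cE2 K H v hnl b hr' f = 0 :=
  ghost_mul_edge_of_ne Sum.inl_ne_inr

theorem cG2_mul_cE {a b : H.E} (hr : H.r a = v) (f : {f : H.E // H.s f = v}) (hr' : H.r b ≠ v)
    (hs' : H.s b ≠ v) : cG2 K H v hnl a hr f * cE K H v hnl b hr' hs' = 0 :=
  ghost_mul_edge_of_ne Sum.inr_ne_inl

theorem cG2_mul_cE2 {a b : H.E} (hr : H.r a = v) (hr' : H.r b = v)
    (f f' : {f : H.E // H.s f = v}) : cG2 K H v hnl a hr f * cE2 K H v hnl b hr' f' =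
      if a = b ∧ f = f' then cV K H v hnl (H.r f.1) (hnl f.1 f.2) else 0 := by
  refine (ghost_mul_edge _ _).trans (ite_congr_iff (Sum.inr_injective.eq_iff.trans ?_) rfl rfl)
  rw [Prod.ext_iff, Subtype.ext_iff]

end

/-- The family in matrices over the Leavitt path algebra of the collapse which describes left
multiplication on `L (1 - v) = (1 - v) L (1 - v) ⊕ v L (1 - v)`, where `L = L_K(H)`. The index `none`
stands for the first summand; the second is identified with `⨁ f, r(f) L (1 - v)`, indexed by the
edges `f` leaving `v`, through `x ↦ (f* x)`. -/
noncomputable def matrixFamily (hreg : H.IsRegular v) :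
    Family H (Matrix (Option {f : H.E // H.s f = v}) (Option {f : H.E // H.s f = v})
      (LeavittPathAlgebra K (H.collapse v hnl))) where
  v u := if h : u = v then
      ∑ f : {f : H.E // H.s f = v}, Matrix.single (some f) (some f)
        (cV K H v hnl (H.r f.1) (hnl f.1 f.2))
    else Matrix.single none none (cV K H v hnl u h)
  e a := if hr : H.r a = v then
      ∑ f : {f : H.E // H.s f = v}, Matrix.single none (some f) (cE2 K H v hnl a hr f)
    else if hs : H.s a = v then
      Matrix.single (some ⟨a, hs⟩) none (cV K H v hnl (H.r a) hr)
    else Matrix.single none none (cE K H v hnl a hr hs)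
  g a := if hr : H.r a = v then
      ∑ f : {f : H.E // H.s f = v}, Matrix.single (some f) none (cG2 K H v hnl a hr f)
    else if hs : H.s a = v then
      Matrix.single none (some ⟨a, hs⟩) (cV K H v hnl (H.r a) hr)
    else Matrix.single none none (cG K H v hnl a hr hs)
  v_mul_v a b := by
    by_cases ha : a = v
    · subst ha
      by_cases hb : b = a
      · subst hb
        simp [Finset.sum_mul, Finset.mul_sum, single_mul_single_ite, cV_mul_self]
      · simp [hb, Ne.symm hb, Finset.sum_mul, single_mul_single_ite]
    · by_cases hb : b = v
      · subst hb
        simp [ha, Finset.mul_sum, single_mul_single_ite]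
      · simp only [ha, hb, dite_false, single_mul_single_ite, if_true, cV_mul_cV]
        by_cases hab : a = b <;> simp [hab]
  v_mul_e a := by
    by_cases hr : H.r a = v
    · have hs : H.s a ≠ v := fun h => hnl a h hr
      simp only [hr, hs, dite_true, dite_false, Finset.mul_sum, single_mul_single_ite, if_true]
      refine Finset.sum_congr rfl fun f _ => ?_
      rw [cV_mul_cE2]
    · by_cases hs : H.s a = v
      · simp [hr, hs, Finset.sum_mul, single_mul_single_ite, cV_mul_self]
      · simp only [hr, hs, dite_false, single_mul_single_ite, if_true]
        rw [cV_mul_cE]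
  e_mul_v a := by
    by_cases hr : H.r a = v
    · simp only [hr, dite_true, Finset.mul_sum, Finset.sum_mul, single_mul_single_ite,
        Option.some.injEq, Finset.sum_ite_eq, Finset.sum_ite_eq', Finset.mem_univ, if_true]
      refine Finset.sum_congr rfl fun f _ => ?_
      rw [cE2_mul_cV]
    · by_cases hs : H.s a = v
      · simp [hr, hs, single_mul_single_ite, cV_mul_self]
      · simp only [hr, hs, dite_false, single_mul_single_ite, if_true]
        rw [cE_mul_cV]
  v_mul_g a := by
    by_cases hr : H.r a = v
    · simp only [hr, dite_true, Finset.mul_sum, Finset.sum_mul, single_mul_single_ite,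
        Option.some.injEq, Finset.sum_ite_eq, Finset.sum_ite_eq', Finset.mem_univ, if_true]
      refine Finset.sum_congr rfl fun f _ => ?_
      rw [cV_mul_cG2]
    · by_cases hs : H.s a = v
      · simp [hr, hs, single_mul_single_ite, cV_mul_self]
      · simp only [hr, hs, dite_false, single_mul_single_ite, if_true]
        rw [cV_mul_cG]
  g_mul_v a := by
    by_cases hr : H.r a = v
    · have hs : H.s a ≠ v := fun h => hnl a h hr
      simp only [hr, hs, dite_true, dite_false, Finset.sum_mul, single_mul_single_ite, if_true]
      refine Finset.sum_congr rfl fun f _ => ?_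
      rw [cG2_mul_cV]
    · by_cases hs : H.s a = v
      · simp [hr, hs, Finset.mul_sum, single_mul_single_ite, cV_mul_self]
      · simp only [hr, hs, dite_false, single_mul_single_ite, if_true]
        rw [cG_mul_cV]
  g_mul_e a b := by
    by_cases har : H.r a = v
    · have has : H.s a ≠ v := fun h => hnl a h har
      by_cases hbr : H.r b = v
      · by_cases hab : a = b
        · subst hab
          simp only [har, dite_true, Finset.mul_sum, Finset.sum_mul, single_mul_single_ite,
            if_true, cG_mul_cE, cG_mul_cE2,
            cG2_mul_cE, cG2_mul_cE2]
          refine Finset.sum_congr rfl fun f _ => ?_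
          rw [Finset.sum_eq_single f]
          · simp
          · intro f' _ hf'
            simp [hf']
          · simp
        · simp [har, hbr, hab, Finset.mul_sum, Finset.sum_mul, single_mul_single_ite,
            cG_mul_cE, cG_mul_cE2,
            cG2_mul_cE, cG2_mul_cE2]
      · have hab : a ≠ b := fun h => hbr (h ▸ har)
        by_cases hbs : H.s b = v
        · simp [har, hbr, hbs, hab, Finset.sum_mul, single_mul_single_ite]
        · simp [har, hbr, hbs, hab, Finset.sum_mul, single_mul_single_ite, cG_mul_cE, cG_mul_cE2,
            cG2_mul_cE, cG2_mul_cE2]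
    · by_cases has : H.s a = v
      · by_cases hbr : H.r b = v
        · have hab : a ≠ b := fun h => har (h ▸ hbr)
          simp [har, has, hbr, hab, Finset.mul_sum, single_mul_single_ite]
        · by_cases hbs : H.s b = v
          · by_cases hab : a = b
            · subst hab
              simp [har, has, single_mul_single_ite, cV_mul_self]
            · simp [har, has, hbr, hbs, hab, single_mul_single_ite]
          · have hab : a ≠ b := fun h => hbs (h ▸ has)
            simp [har, has, hbr, hbs, hab, single_mul_single_ite]
      · by_cases hbr : H.r b = v
        · have hab : a ≠ b := fun h => har (h ▸ hbr)
          simp [har, has, hbr, hab, Finset.mul_sum, single_mul_single_ite, cG_mul_cE, cG_mul_cE2,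
            cG2_mul_cE, cG2_mul_cE2]
        · by_cases hbs : H.s b = v
          · have hab : a ≠ b := fun h => has (h ▸ hbs)
            simp [har, has, hbr, hbs, hab, single_mul_single_ite]
          · by_cases hab : a = b
            · subst hab
              simp only [har, has, dite_false, single_mul_single_ite, if_true,
                cG_mul_cE]
            · simp [har, has, hbr, hbs, hab, single_mul_single_ite, cG_mul_cE, cG_mul_cE2,
                cG2_mul_cE, cG2_mul_cE2]
  ck u hu := by
    by_cases huv : u = v
    · subst huv
      rw [dif_pos rfl]
      symm
      rw [Finset.sum_subtype _ (p := fun e => H.s e = u) (by simp)]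
      refine Finset.sum_congr rfl fun f _ => ?_
      simp [hnl f.1 f.2, f.2, single_mul_single_ite, cV_mul_self]
    · rw [dif_neg huv]
      have hu' : (H.collapse v hnl).IsRegular ⟨u, huv⟩ := by
        obtain ⟨e, he⟩ := hu
        by_cases hr : H.r e = v
        · obtain ⟨f, hf⟩ := hreg
          exact ⟨Sum.inr (⟨e, hr⟩, ⟨f, hf⟩), Subtype.ext he⟩
        · exact ⟨Sum.inl ⟨e, hr, fun h => huv (he.symm.trans h)⟩, Subtype.ext he⟩
      rw [cV, vert_eq_sum _ hu']
      refine Eq.trans ?_ (H.sum_collapse v hnl (fun x => Matrix.single none none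
        (edge K (H.collapse v hnl) x * ghost K (H.collapse v hnl) x)) _ ?_ ?_ ⟨u, huv⟩)
      · exact map_sum (Matrix.singleAddMonoidHom none none) _ _
      · intro e
        simp [e.2.1, e.2.2]
        rfl
      · intro e
        simp [e.2, single_mul_single_ite, Finset.mul_sum, Finset.sum_mul]
        rfl

end Collapse

end LeavittPathAlgebra

/-! ### A collapse gives a full corner -/

namespace LeavittPathAlgebra

section CollapseCorner

variable (K : Type) [Field K] (H : FinGraph) (v : H.V)
  (hnl : ∀ e : H.E, H.s e = v → H.r e ≠ v)

/-- The elements `1 - v` and `f`, for the edges `f` leaving `v`. With the elements `1 - v` and `f*` of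
`cornerCol` they satisfy `(1 - v) (1 - v) + ∑ f f* = 1`, which shows that `1 - v` is full. -/
noncomputable def cornerRow : Option {f : H.E // H.s f = v} → LeavittPathAlgebra K H
  | none => 1 - vert K H v
  | some f => edge K H f.1

/-- The elements `1 - v` and `f*`, for the edges `f` leaving `v`; see `cornerRow`. -/
noncomputable def cornerCol : Option {f : H.E // H.s f = v} → LeavittPathAlgebra K H
  | none => 1 - vert K H v
  | some f => ghost K H f.1

variable {K H v} in
theorem compl_mul_self : (1 - vert K H v) * (1 - vert K H v) = 1 - vert K H v := by
  rw [mul_sub, mul_one, sub_mul, one_mul, vert_mul_self, sub_self, sub_zero]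

variable {K H v} in
theorem compl_mul_of {x : LeavittPathAlgebra K H} {u : H.V} (hu : u ≠ v)
    (hx : vert K H u * x = x) : (1 - vert K H v) * x = x := by
  rw [← hx, ← mul_assoc, sub_mul, vert_mul_vert_of_ne hu.symm, one_mul, sub_zero]

variable {K H v} in
theorem mul_compl_of {x : LeavittPathAlgebra K H} {u : H.V} (hu : u ≠ v)
    (hx : x * vert K H u = x) : x * (1 - vert K H v) = x := by
  rw [← hx, mul_assoc, mul_sub, vert_mul_vert_of_ne hu, mul_one, sub_zero]

/-- The Leavitt path algebra of the collapse at `v` is the corner of `L_K(H)` at the full idempotent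
`1 - v`; hence `L_K(H)` is a full corner of matrices over it. -/
theorem collapse_isMatrixCorner (hreg : H.IsRegular v) :
    IsMatrixCorner K (LeavittPathAlgebra K H) (LeavittPathAlgebra K (H.collapse v hnl)) := by
  obtain ⟨θ, θv, θe, θg⟩ := (collapseFamily K H v hnl hreg).exists_lift (K := K)
  obtain ⟨φ, φv, φe, φg⟩ := (matrixFamily K H v hnl hreg).exists_lift (K := K)
  have θv' : ∀ (u : H.V) (h : u ≠ v), θ (cV K H v hnl u h) = vert K H u := fun u h => θv _
  have θe' : ∀ (a : H.E) hr hs, θ (cE K H v hnl a hr hs) = edge K H a := fun a _ _ => θe _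
  have θg' : ∀ (a : H.E) hr hs, θ (cG K H v hnl a hr hs) = ghost K H a := fun a _ _ => θg _
  have θe2 : ∀ (a : H.E) hr f, θ (cE2 K H v hnl a hr f) = edge K H a * edge K H f.1 :=
    fun a _ _ => θe _
  have θg2 : ∀ (a : H.E) hr f, θ (cG2 K H v hnl a hr f) = ghost K H f.1 * ghost K H a :=
    fun a _ _ => θg _
  have φv' : ∀ (u : H.V) (h : u ≠ v), φ (vert K H u) = Matrix.single none none (cV K H v hnl u h) :=
    fun u h => (φv u).trans (dif_neg h)
  have φe' : ∀ (a : H.E) hr hs, φ (edge K H a) = Matrix.single none none (cE K H v hnl a hr hs) :=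
    fun a hr hs => (φe a).trans ((dif_neg hr).trans (dif_neg hs))
  have φg' : ∀ (a : H.E) hr hs, φ (ghost K H a) = Matrix.single none none (cG K H v hnl a hr hs) :=
    fun a hr hs => (φg a).trans ((dif_neg hr).trans (dif_neg hs))
  have φe_in : ∀ (a : H.E) (hr : H.r a = v), φ (edge K H a) =
      ∑ f : {f : H.E // H.s f = v}, Matrix.single none (some f) (cE2 K H v hnl a hr f) :=
    fun a hr => (φe a).trans (dif_pos hr)
  have φg_in : ∀ (a : H.E) (hr : H.r a = v), φ (ghost K H a) =
      ∑ f : {f : H.E // H.s f = v}, Matrix.single (some f) none (cG2 K H v hnl a hr f) :=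
    fun a hr => (φg a).trans (dif_pos hr)
  have φe_out : ∀ (a : H.E) (hs : H.s a = v), φ (edge K H a) =
      Matrix.single (some ⟨a, hs⟩) none (cV K H v hnl (H.r a) (hnl a hs)) :=
    fun a hs => (φe a).trans ((dif_neg (hnl a hs)).trans (dif_pos hs))
  have φg_out : ∀ (a : H.E) (hs : H.s a = v), φ (ghost K H a) =
      Matrix.single none (some ⟨a, hs⟩) (cV K H v hnl (H.r a) (hnl a hs)) :=
    fun a hs => (φg a).trans ((dif_neg (hnl a hs)).trans (dif_pos hs))
  -- `φ ∘ θ` places an element in the corner entry, which gives injectivity of `θ`.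
  have hφθ : ∀ x, φ (θ x) = Matrix.single none none x := by
    intro x
    induction x using induction with
    | hv u => exact (congrArg φ (θv u)).trans (φv' u.1 u.2)
    | he a =>
      rcases a with a | ⟨a, f⟩
      · exact (congrArg φ (θe _)).trans (φe' a.1 a.2.1 a.2.2)
      · refine (congrArg φ (θe2 a.1 a.2 f)).trans ?_
        rw [map_mul, φe_in a.1 a.2, φe_out f.1 f.2]
        simp only [Finset.sum_mul, single_mul_single_ite, Option.some.injEq, Subtype.coe_eta,
          Finset.sum_ite_eq', Finset.mem_univ, if_true, cE2_mul_cV]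
        rfl
    | hg a =>
      rcases a with a | ⟨a, f⟩
      · exact (congrArg φ (θg _)).trans (φg' a.1 a.2.1 a.2.2)
      · refine (congrArg φ (θg2 a.1 a.2 f)).trans ?_
        rw [map_mul, φg_in a.1 a.2, φg_out f.1 f.2]
        simp only [Finset.mul_sum, single_mul_single_ite, Option.some.injEq, Subtype.coe_eta,
          Finset.sum_ite_eq, Finset.mem_univ, if_true, cV_mul_cG2]
        rfl
    | h0 => simp
    | hadd x y hx hy => rw [map_add, map_add, hx, hy, Matrix.single_add]
    | hmul x y hx hy => rw [map_mul, map_mul, hx, hy, Matrix.single_mul_single_same]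
    | hsmul c x hx => rw [map_smul, map_smul, hx, Matrix.smul_single]
  have θ_inj : Function.Injective θ := fun x y h => by
    have := congrArg φ h
    rw [hφθ, hφθ] at this
    simpa using congrFun (congrFun this none) none
  have θ_one : θ 1 = 1 - vert K H v := by
    rw [one_eq_sum, map_sum, eq_sub_iff_add_eq, add_comm, one_eq_sum,
      ← Fintype.sum_subtype_add_sum_subtype (fun u => u = v) (fun u => vert K H u)]
    congr 1
    · simp only [Finset.univ_unique, Finset.sum_singleton]
      rfl
    · exact Finset.sum_congr rfl fun u _ => θv u
  have hsum : ∑ i, cornerRow K H v i * cornerCol K H v i = 1 := by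
    rw [Fintype.sum_option]
    change (1 - vert K H v) * (1 - vert K H v) +
      ∑ f : {f : H.E // H.s f = v}, edge K H f.1 * ghost K H f.1 = 1
    rw [← vert_eq_sum_subtype K H v hreg, compl_mul_self, sub_add_cancel]
  have hone_mem : 1 - vert K H v ∈ NonUnitalAlgHom.range θ := ⟨1, θ_one⟩
  have hba : ∀ i j, cornerCol K H v i * cornerRow K H v j ∈ NonUnitalAlgHom.range θ := by
    rintro (_ | f) (_ | f')
    · change (1 - vert K H v) * (1 - vert K H v) ∈ _
      rwa [compl_mul_self]
    · change (1 - vert K H v) * edge K H f'.1 ∈ _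
      rw [sub_mul, one_mul, vert_mul_edge' f'.2, sub_self]
      exact zero_mem _
    · change ghost K H f.1 * (1 - vert K H v) ∈ _
      rw [mul_sub, mul_one, ghost_mul_vert' f.2, sub_self]
      exact zero_mem _
    · change ghost K H f.1 * edge K H f'.1 ∈ _
      rw [ghost_mul_edge]
      split_ifs
      · exact ⟨_, θv' (H.r f.1) (hnl f.1 f.2)⟩
      · exact zero_mem _
  -- All compressions `b_i x a_j` lie in the range of `θ`; as `∑ a_k b_k = 1`, this property of `x`
  -- passes to products.
  have key : ∀ x i j, cornerCol K H v i * x * cornerRow K H v j ∈ NonUnitalAlgHom.range θ := by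
    have basic : ∀ (k l) (s), ∀ i j, cornerCol K H v i *
        (cornerRow K H v k * θ s * cornerCol K H v l) * cornerRow K H v j ∈
          NonUnitalAlgHom.range θ := by
      intro k l s i j
      have := mul_mem (mul_mem (hba i k) (⟨s, rfl⟩ : θ s ∈ NonUnitalAlgHom.range θ)) (hba l j)
      simpa only [mul_assoc] using this
    have hnn : ∀ s, (1 - vert K H v) * θ s * (1 - vert K H v) = θ s := fun s => by
      rw [← θ_one, nonUnitalHom_one_mul, nonUnitalHom_mul_one]
    have basic_nn : ∀ s, ∀ i j, cornerCol K H v i * θ s * cornerRow K H v j ∈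
          NonUnitalAlgHom.range θ := fun s i j => by
      have := basic none none s i j
      rwa [show cornerRow K H v none * θ s * cornerCol K H v none = θ s from hnn s] at this
    intro x
    induction x using induction with
    | hv u =>
      by_cases hu : u = v
      · subst hu
        rw [vert_eq_sum_subtype K H u hreg]
        intro i j
        rw [Finset.mul_sum, Finset.sum_mul]
        refine sum_mem fun f _ => ?_
        have := basic (some f) (some f) (cV K H u hnl (H.r f.1) (hnl f.1 f.2)) i j
        rwa [θv', show cornerRow K H u (some f) = edge K H f.1 from rfl, edge_mul_vert] at this
      · rw [← θv' u hu]
        exact basic_nn _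
    | he a =>
      by_cases hr : H.r a = v
      · intro i j
        rw [← edge_mul_vert' hr, vert_eq_sum_subtype K H v hreg, Finset.mul_sum, Finset.mul_sum,
          Finset.sum_mul]
        refine sum_mem fun f _ => ?_
        have hs : H.s a ≠ v := fun h => hnl a h hr
        have := basic none (some f) (cE2 K H v hnl a hr f) i j
        rwa [θe2, show cornerRow K H v none = 1 - vert K H v from rfl,
          ← mul_assoc (1 - vert K H v), compl_mul_of hs (vert_mul_edge a),
          mul_assoc (edge K H a)] at this
      · by_cases hs : H.s a = v
        · intro i j
          have := basic (some ⟨a, hs⟩) none (cV K H v hnl (H.r a) hr) i j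
          rwa [θv', show cornerRow K H v (some ⟨a, hs⟩) = edge K H a from rfl, edge_mul_vert,
            show cornerCol K H v none = 1 - vert K H v from rfl,
            mul_compl_of hr (edge_mul_vert a)] at this
        · rw [← θe' a hr hs]
          exact basic_nn _
    | hg a =>
      by_cases hr : H.r a = v
      · intro i j
        rw [← vert_mul_ghost' hr, vert_eq_sum_subtype K H v hreg, Finset.sum_mul, Finset.mul_sum,
          Finset.sum_mul]
        refine sum_mem fun f _ => ?_
        have hs : H.s a ≠ v := fun h => hnl a h hr
        have := basic (some f) none (cG2 K H v hnl a hr f) i j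
        rwa [θg2, show cornerCol K H v none = 1 - vert K H v from rfl,
          mul_assoc (cornerRow K H v (some f)), mul_assoc (ghost K H f.1),
          mul_compl_of hs (ghost_mul_vert a), ← mul_assoc (cornerRow K H v (some f))] at this
      · by_cases hs : H.s a = v
        · intro i j
          have := basic none (some ⟨a, hs⟩) (cV K H v hnl (H.r a) hr) i j
          rwa [θv', show cornerCol K H v (some ⟨a, hs⟩) = ghost K H a from rfl,
            mul_assoc (cornerRow K H v none), vert_mul_ghost,
            show cornerRow K H v none = 1 - vert K H v from rfl,
            compl_mul_of hr (vert_mul_ghost a)] at this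
        · rw [← θg' a hr hs]
          exact basic_nn _
    | h0 => intro i j; rw [mul_zero, zero_mul]; exact zero_mem _
    | hadd x y hx hy => intro i j; rw [mul_add, add_mul]; exact add_mem (hx i j) (hy i j)
    | hmul x y hx hy =>
      intro i j
      rw [← mul_one x, ← hsum, Finset.mul_sum, Finset.sum_mul, Finset.mul_sum, Finset.sum_mul]
      refine sum_mem fun k _ => ?_
      have := mul_mem (hx i k) (hy k j)
      simpa only [mul_assoc] using this
    | hsmul c x hx =>
      intro i j
      rw [mul_smul_comm, smul_mul_assoc]
      exact SMulMemClass.smul_mem c (hx i j)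
  refine IsFullCornerEmb.isMatrixCorner (θ := θ) ⟨θ_inj, fun x hx => ?_, ?_⟩
  · rw [θ_one] at hx
    rw [← hx]
    exact key x none none
  · refine ⟨_, inferInstance, ⟨none⟩, cornerRow K H v, cornerCol K H v, ?_⟩
    rw [← hsum, θ_one]
    refine Finset.sum_congr rfl fun i _ => ?_
    congr 1
    rcases i with _ | f
    · exact compl_mul_self
    · exact mul_compl_of (hnl f.1 f.2) (edge_mul_vert f.1)

end CollapseCorner

end LeavittPathAlgebra

/-! ### Graph isomorphisms -/

/-- `G` and `H` are isomorphic graphs: there are bijections of vertices and edges commuting with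
source and range. -/
def FinGraph.IsIso (G H : FinGraph) : Prop :=
  ∃ (a : G.V → H.V) (b : G.E → H.E), Function.Bijective a ∧ Function.Bijective b ∧
    (∀ e, H.s (b e) = a (G.s e)) ∧ (∀ e, H.r (b e) = a (G.r e))

theorem FinGraph.IsIso.symm {G H : FinGraph} (h : G.IsIso H) : H.IsIso G := by
  obtain ⟨a, b, ha, hb, hs, hr⟩ := h
  let a' := Equiv.ofBijective a ha
  let b' := Equiv.ofBijective b hb
  refine ⟨a'.symm, b'.symm, a'.symm.bijective, b'.symm.bijective, fun e => ?_, fun e => ?_⟩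
  · rw [Equiv.eq_symm_apply]
    refine (hs _).symm.trans ?_
    exact congrArg H.s (b'.apply_symm_apply e)
  · rw [Equiv.eq_symm_apply]
    refine (hr _).symm.trans ?_
    exact congrArg H.r (b'.apply_symm_apply e)

theorem IsMatrixCorner.of_bijective {K : Type} [Field K] {S R : Type} [Ring S] [Ring R]
    [Algebra K S] [Algebra K R] (θ : S →ₙₐ[K] R) (h : Function.Bijective θ) :
    IsMatrixCorner K R S := by
  have h1 : θ 1 = 1 := by
    obtain ⟨s, hs⟩ := h.2 1
    rw [← mul_one (θ 1), ← hs, nonUnitalHom_one_mul]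
  exact IsFullCornerEmb.isMatrixCorner (θ := θ) ⟨h.1, fun x _ => h.2 x,
    ⟨Unit, inferInstance, inferInstance, 1, 1, by simp [h1]⟩⟩

namespace LeavittPathAlgebra

theorem isMatrixCorner_of_isIso (K : Type) [Field K] {G H : FinGraph} (h : G.IsIso H) :
    IsMatrixCorner K (LeavittPathAlgebra K H) (LeavittPathAlgebra K G) := by
  -- The family of `G` in the Leavitt path algebra of an isomorphic graph.
  have fam : ∀ {G H : FinGraph} (a : G.V → H.V) (b : G.E → H.E), Function.Bijective a →
      Function.Bijective b → (∀ e, H.s (b e) = a (G.s e)) → (∀ e, H.r (b e) = a (G.r e)) →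
      ∃ φ : LeavittPathAlgebra K G →ₙₐ[K] LeavittPathAlgebra K H,
        (∀ v, φ (vert K G v) = vert K H (a v)) ∧ (∀ e, φ (edge K G e) = edge K H (b e)) ∧
        (∀ e, φ (ghost K G e) = ghost K H (b e)) := by
    intro G H a b ha hb hs hr
    exact Family.exists_lift (K := K)
      { v := fun v => vert K H (a v)
        e := fun e => edge K H (b e)
        g := fun e => ghost K H (b e)
        v_mul_v := fun u w => (vert_mul_vert _ _).trans (ite_congr_iff ha.1.eq_iff rfl rfl)
        v_mul_e := fun e => vert_mul_edge' (hs e)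
        e_mul_v := fun e => edge_mul_vert' (hr e)
        v_mul_g := fun e => vert_mul_ghost' (hr e)
        g_mul_v := fun e => ghost_mul_vert' (hs e)
        g_mul_e := fun e f => (ghost_mul_edge _ _).trans
          (ite_congr_iff hb.1.eq_iff (by rw [hr]) rfl)
        ck := fun u hu => by
          have hu' : H.IsRegular (a u) := by
            obtain ⟨e, rfl⟩ := hu
            exact ⟨b e, hs e⟩
          rw [vert_eq_sum _ hu']
          refine (Finset.sum_bijective b hb (fun e => ?_) fun e _ => rfl).symm
          simp [hs, ha.1.eq_iff] }
  obtain ⟨a, b, ha, hb, hs, hr⟩ := h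
  obtain ⟨φ, φv, φe, φg⟩ := fam a b ha hb hs hr
  have hinj : Function.Injective φ := by
    let a' := Equiv.ofBijective a ha
    let b' := Equiv.ofBijective b hb
    have hb' : ∀ e, b (b'.symm e) = e := b'.apply_symm_apply
    obtain ⟨ψ, ψv, ψe, ψg⟩ := fam (G := H) (H := G) a'.symm b'.symm a'.symm.bijective
      b'.symm.bijective
      (fun e => by rw [Equiv.eq_symm_apply]; exact (hs _).symm.trans (congrArg H.s (hb' e)))
      (fun e => by rw [Equiv.eq_symm_apply]; exact (hr _).symm.trans (congrArg H.r (hb' e)))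
    have hid : ∀ x, (ψ.comp φ) x = NonUnitalAlgHom.id K _ x := by
      refine nonUnitalHom_eq (fun v => ?_) (fun e => ?_) (fun e => ?_)
      · simp only [NonUnitalAlgHom.comp_apply, φv, ψv, NonUnitalAlgHom.coe_id, id]
        exact congrArg _ (a'.symm_apply_apply v)
      · simp only [NonUnitalAlgHom.comp_apply, φe, ψe, NonUnitalAlgHom.coe_id, id]
        exact congrArg _ (b'.symm_apply_apply e)
      · simp only [NonUnitalAlgHom.comp_apply, φg, ψg, NonUnitalAlgHom.coe_id, id]
        exact congrArg _ (b'.symm_apply_apply e)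
    intro x y hxy
    have := congrArg ψ hxy
    exact (hid x).symm.trans (this.trans (hid y))
  have hsurj : Function.Surjective φ := by
    intro x
    induction x using induction with
    | hv v => obtain ⟨u, rfl⟩ := ha.2 v; exact ⟨_, φv u⟩
    | he e => obtain ⟨e, rfl⟩ := hb.2 e; exact ⟨_, φe e⟩
    | hg e => obtain ⟨e, rfl⟩ := hb.2 e; exact ⟨_, φg e⟩
    | h0 => exact ⟨0, map_zero φ⟩
    | hadd x y hx hy =>
      obtain ⟨x, rfl⟩ := hx; obtain ⟨y, rfl⟩ := hy; exact ⟨x + y, map_add φ x y⟩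
    | hmul x y hx hy =>
      obtain ⟨x, rfl⟩ := hx; obtain ⟨y, rfl⟩ := hy; exact ⟨x * y, map_mul φ x y⟩
    | hsmul c x hx => obtain ⟨x, rfl⟩ := hx; exact ⟨c • x, map_smul φ c x⟩
  exact IsMatrixCorner.of_bijective φ ⟨hinj, hsurj⟩

end LeavittPathAlgebra

namespace FinGraph

theorem isIso_zero (G : FinGraph) : G.IsIso ((discrete 0).disjUnion G) := by
  refine ⟨Sum.inr, Sum.inr, ⟨Sum.inr_injective, ?_⟩, ⟨Sum.inr_injective, ?_⟩,
    fun _ => rfl, fun _ => rfl⟩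
  · rintro (x | x)
    · exact Fin.elim0 x
    · exact ⟨x, rfl⟩
  · rintro (x | x)
    · exact Empty.elim x
    · exact ⟨x, rfl⟩

theorem disjUnion_noLoop (D H : FinGraph) (v : H.V) (hnl : ∀ e : H.E, H.s e = v → H.r e ≠ v)
    (e : (D.disjUnion H).E) (he : (D.disjUnion H).s e = Sum.inr v) :
    (D.disjUnion H).r e ≠ Sum.inr v := by
  rcases e with e | e
  · exact fun h => Sum.inl_ne_inr h
  · exact fun h => hnl e (Sum.inr_injective he) (Sum.inr_injective h)

theorem disjUnion_isRegular (D H : FinGraph) {v : H.V} (h : H.IsRegular v) :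
    (D.disjUnion H).IsRegular (Sum.inr v) := by
  obtain ⟨e, rfl⟩ := h
  exact ⟨Sum.inr e, rfl⟩

/-- The vertices of the collapse of `D ⊔ H` at a vertex `v` of `H`. -/
theorem bijective_vert_disjUnion (D H : FinGraph) (v : H.V) :
    Function.Bijective (Sum.elim (fun i => ⟨Sum.inl i, Sum.inl_ne_inr⟩)
      (fun u => ⟨Sum.inr u.1, fun h => u.2 (Sum.inr_injective h)⟩) :
        D.V ⊕ {u : H.V // u ≠ v} → {u : D.V ⊕ H.V // u ≠ Sum.inr v}) := by
  constructor
  · rintro (i | u) (j | w) h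
    · exact congrArg Sum.inl (Sum.inl_injective (congrArg Subtype.val h))
    · exact (Sum.inl_ne_inr (congrArg Subtype.val h)).elim
    · exact (Sum.inr_ne_inl (congrArg Subtype.val h)).elim
    · exact congrArg Sum.inr (Subtype.ext (Sum.inr_injective (congrArg Subtype.val h)))
  · rintro ⟨i | u, h⟩
    · exact ⟨Sum.inl i, rfl⟩
    · exact ⟨Sum.inr ⟨u, fun h' => h (congrArg Sum.inr h')⟩, rfl⟩

theorem isIso_collapse (k : ℕ) (H : FinGraph) (v : H.V)
    (hnl : ∀ e : H.E, H.s e = v → H.r e ≠ v) :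
    ((discrete k).disjUnion (H.collapse v hnl)).IsIso
      (((discrete k).disjUnion H).collapse (Sum.inr v) (disjUnion_noLoop _ H v hnl)) := by
  refine ⟨_, fun e => match e with
    | Sum.inr (Sum.inl e) => Sum.inl ⟨Sum.inr e.1, fun h => e.2.1 (Sum.inr_injective h),
        fun h => e.2.2 (Sum.inr_injective h)⟩
    | Sum.inr (Sum.inr p) => Sum.inr (⟨Sum.inr p.1.1, congrArg Sum.inr p.1.2⟩,
        ⟨Sum.inr p.2.1, congrArg Sum.inr p.2.2⟩),
    bijective_vert_disjUnion (discrete k) H v, ⟨?_, ?_⟩, ?_, ?_⟩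
  · rintro (⟨⟨⟩⟩ | e | p) (⟨⟨⟩⟩ | e' | p') h
    · exact congrArg (Sum.inr ∘ Sum.inl)
        (Subtype.ext (Sum.inr_injective (congrArg Subtype.val (Sum.inl_injective h))))
    · exact (Sum.inl_ne_inr h).elim
    · exact (Sum.inr_ne_inl h).elim
    · have h' := Sum.inr_injective h
      exact congrArg (Sum.inr ∘ Sum.inr) (Prod.ext
        (Subtype.ext (Sum.inr_injective (congrArg Subtype.val (congrArg Prod.fst h'))))
        (Subtype.ext (Sum.inr_injective (congrArg Subtype.val (congrArg Prod.snd h')))))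
  · rintro (⟨⟨⟨⟩⟩ | e, h⟩ | ⟨⟨⟨⟨⟩⟩ | e, h⟩, ⟨⟨⟨⟩⟩ | f, h'⟩⟩)
    · exact ⟨Sum.inr (Sum.inl ⟨e, fun h' => h.1 (congrArg Sum.inr h'),
        fun h' => h.2 (congrArg Sum.inr h')⟩), rfl⟩
    · exact ⟨Sum.inr (Sum.inr (⟨e, Sum.inr_injective h⟩, ⟨f, Sum.inr_injective h'⟩)), rfl⟩
  · rintro (⟨⟨⟩⟩ | e | p) <;> rfl
  · rintro (⟨⟨⟩⟩ | e | p) <;> rfl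

/-- Eliminating a regular source is the same as collapsing at it. -/
theorem isIso_sourceElim (k : ℕ) (H : FinGraph) (v : H.V) (hsrc : H.IsSource v) :
    ((discrete k).disjUnion (H.sourceElim v hsrc)).IsIso
      (((discrete k).disjUnion H).collapse (Sum.inr v)
        (disjUnion_noLoop _ H v fun e _ => hsrc e)) := by
  refine ⟨_, fun e => match e with
    | Sum.inr e => Sum.inl ⟨Sum.inr e.1, fun h => hsrc e.1 (Sum.inr_injective h),
        fun h => e.2 (Sum.inr_injective h)⟩,
    bijective_vert_disjUnion (discrete k) H v, ⟨?_, ?_⟩, ?_, ?_⟩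
  · rintro (⟨⟨⟩⟩ | e) (⟨⟨⟩⟩ | e') h
    exact congrArg Sum.inr
        (Subtype.ext (Sum.inr_injective (congrArg Subtype.val (Sum.inl_injective h))))
  · rintro (⟨⟨⟨⟩⟩ | e, h⟩ | ⟨⟨⟨⟨⟩⟩ | e, h⟩, f⟩)
    · exact ⟨Sum.inr ⟨e, fun h' => h.2 (congrArg Sum.inr h')⟩, rfl⟩
    · exact (hsrc e (Sum.inr_injective h)).elim
  · rintro (⟨⟨⟩⟩ | e); rfl
  · rintro (⟨⟨⟩⟩ | e); rfl

/-- Eliminating an isolated vertex moves it to the discrete part. -/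
theorem isIso_isolated (k : ℕ) (H : FinGraph) (v : H.V) (hsrc : H.IsSource v)
    (hsink : H.IsSink v) :
    ((discrete (k + 1)).disjUnion (H.sourceElim v hsrc)).IsIso ((discrete k).disjUnion H) := by
  refine ⟨Sum.elim (Fin.cases (Sum.inr v) fun j => Sum.inl j) fun u => Sum.inr u.1,
    Sum.map id Subtype.val, ⟨?_, ?_⟩, ⟨?_, ?_⟩, ?_, ?_⟩
  · rintro (i | u) (j | w) h
    · refine congrArg Sum.inl ?_
      induction i using Fin.cases with
      | zero =>
        induction j using Fin.cases with
        | zero => rfl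
        | succ j => exact (Sum.inr_ne_inl h).elim
      | succ i =>
        induction j using Fin.cases with
        | zero => exact (Sum.inl_ne_inr h).elim
        | succ j => exact congrArg Fin.succ (Sum.inl_injective h)
    · induction i using Fin.cases with
      | zero => exact (w.2 (Sum.inr_injective h).symm).elim
      | succ i => exact (Sum.inl_ne_inr h).elim
    · induction j using Fin.cases with
      | zero => exact (u.2 (Sum.inr_injective h)).elim
      | succ j => exact (Sum.inr_ne_inl h).elim
    · exact congrArg Sum.inr (Subtype.ext (Sum.inr_injective h))
  · rintro (i | u)
    · exact ⟨Sum.inl (Fin.succ i), rfl⟩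
    · by_cases h : u = v
      · subst h
        exact ⟨Sum.inl (0 : Fin (k + 1)), rfl⟩
      · exact ⟨Sum.inr ⟨u, h⟩, rfl⟩
  · rintro (⟨⟨⟩⟩ | e) (⟨⟨⟩⟩ | e') h
    exact congrArg Sum.inr (Subtype.ext (Sum.inr_injective h))
  · rintro (⟨⟨⟩⟩ | e)
    exact ⟨Sum.inr ⟨e, hsink e⟩, rfl⟩
  · rintro (⟨⟨⟩⟩ | e); rfl
  · rintro (⟨⟨⟩⟩ | e); rfl

end FinGraph

/-! ### Chains of eliminations and collapses -/

namespace FinGraph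

theorem ElimChain.vmap_injective {E H : FinGraph} (c : ElimChain E H) :
    Function.Injective c.vmap := by
  induction c with
  | refl => exact fun x y h => h
  | step c v hsrc ih => exact fun x y h => Subtype.ext (ih h)

/-- Source elimination removes no edge leaving a surviving vertex. -/
theorem ElimChain.isSink_vmap {E H : FinGraph} (c : ElimChain E H) (u : H.V) :
    E.IsSink (c.vmap u) ↔ H.IsSink u := by
  induction c with
  | refl => exact Iff.rfl
  | @step H c v hsrc ih =>
    refine (ih u.1).trans ⟨fun h e he => h e.1 (congrArg Subtype.val he), fun h e he => ?_⟩
    exact h ⟨e, fun h' => u.2 (he.symm.trans h')⟩ (Subtype.ext he)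

theorem ElimChain.mem_range_step {E H : FinGraph} (c : ElimChain E H) (v : H.V)
    (hsrc : H.IsSource v) (w : E.V) :
    w ∈ Set.range (ElimChain.step c v hsrc).vmap ↔ w ∈ Set.range c.vmap ∧ w ≠ c.vmap v := by
  constructor
  · rintro ⟨u, rfl⟩
    exact ⟨⟨u.1, rfl⟩, fun h => u.2 (c.vmap_injective h)⟩
  · rintro ⟨⟨u, rfl⟩, h⟩
    exact ⟨⟨u, fun h' => h (congrArg _ h')⟩, rfl⟩

theorem ElimChain.card_step_of_isRegular {E H : FinGraph} (c : ElimChain E H) (v : H.V)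
    (hsrc : H.IsSource v) (hv : ¬ H.IsSink v) :
    Nat.card {w : E.V // E.IsSink w ∧ w ∉ Set.range (ElimChain.step c v hsrc).vmap} =
      Nat.card {w : E.V // E.IsSink w ∧ w ∉ Set.range c.vmap} := by
  refine Nat.card_congr (Equiv.subtypeEquivRight fun w => ?_)
  rw [mem_range_step]
  refine and_congr_right fun hw => not_congr ⟨fun h => h.1, fun h => ⟨h, ?_⟩⟩
  rintro rfl
  exact hv ((c.isSink_vmap v).mp hw)

theorem ElimChain.card_step_of_isSink {E H : FinGraph} (c : ElimChain E H) (v : H.V)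
    (hsrc : H.IsSource v) (hv : H.IsSink v) :
    Nat.card {w : E.V // E.IsSink w ∧ w ∉ Set.range (ElimChain.step c v hsrc).vmap} =
      Nat.card {w : E.V // E.IsSink w ∧ w ∉ Set.range c.vmap} + 1 := by
  have h : {w : E.V | E.IsSink w ∧ w ∉ Set.range (ElimChain.step c v hsrc).vmap} =
      insert (c.vmap v) {w : E.V | E.IsSink w ∧ w ∉ Set.range c.vmap} := by
    ext w
    rw [Set.mem_insert_iff, Set.mem_ofPred_eq, Set.mem_ofPred_eq, mem_range_step]
    by_cases hw : w = c.vmap v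
    · subst hw
      simp [(c.isSink_vmap v).mpr hv]
    · simp [hw]
  have h' := congrArg Set.ncard h
  rw [Set.ncard_insert_of_notMem (fun h => h.2 ⟨v, rfl⟩) (Set.toFinite _)] at h'
  exact h'

end FinGraph

namespace LeavittPathAlgebra

open FinGraph

/-- Source elimination at a regular vertex is a collapse, and at a sink it splits off an isolated
vertex; these isolated vertices are the sinks lost along the chain. -/
theorem isMatrixCorner_of_elimChain (K : Type) [Field K] {E H : FinGraph} (c : ElimChain E H) :
    IsMatrixCorner K (LeavittPathAlgebra K E) (LeavittPathAlgebra K ((discrete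
      (Nat.card {w : E.V // E.IsSink w ∧ w ∉ Set.range c.vmap})).disjUnion H)) := by
  induction c with
  | refl =>
    have : IsEmpty {w : E.V // E.IsSink w ∧ w ∉ Set.range (ElimChain.refl (E := E)).vmap} :=
      ⟨fun w => w.2.2 ⟨w.1, rfl⟩⟩
    rw [Nat.card_of_isEmpty]
    exact isMatrixCorner_of_isIso K E.isIso_zero.symm
  | step c v hsrc ih =>
    refine ih.trans ?_
    by_cases hv : IsSink _ v
    · rw [c.card_step_of_isSink v hsrc hv]
      exact isMatrixCorner_of_isIso K (isIso_isolated _ _ v hsrc hv)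
    · rw [c.card_step_of_isRegular v hsrc hv]
      have hreg : IsRegular _ v := by
        by_contra h
        exact hv fun e he => h ⟨e, he⟩
      exact (collapse_isMatrixCorner K _ _ _ (disjUnion_isRegular _ _ hreg)).trans
        (isMatrixCorner_of_isIso K (isIso_sourceElim _ _ v hsrc))

theorem isMatrixCorner_of_collapseChain (K : Type) [Field K] (k : ℕ) {E H : FinGraph}
    (c : CollapseChain E H) :
    IsMatrixCorner K (LeavittPathAlgebra K ((discrete k).disjUnion E))
      (LeavittPathAlgebra K ((discrete k).disjUnion H)) := by
  induction c with
  | refl => exact IsMatrixCorner.of_algEquiv AlgEquiv.refl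
  | step c v hreg hnl ih =>
    exact ih.trans ((collapse_isMatrixCorner K _ _ _ (disjUnion_isRegular _ _ hreg)).trans
      (isMatrixCorner_of_isIso K (isIso_collapse _ _ v hnl)))

/-- The isolated vertices contribute a factor `K` each. -/
theorem disjUnion_isMatrixCorner (K : Type) [Field K] (k : ℕ) (F : FinGraph) :
    IsMatrixCorner K (LeavittPathAlgebra K ((discrete k).disjUnion F))
      ((Fin k → K) × LeavittPathAlgebra K F) := by
  have sum_edges : ∀ {M : Type} [AddCommMonoid M] (A : ((discrete k).disjUnion F).E → M)
      (w : ((discrete k).disjUnion F).V) (u : F.V), w = Sum.inr u →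
      ∑ b ∈ Finset.univ.filter (fun b => ((discrete k).disjUnion F).s b = w), A b =
        ∑ b ∈ Finset.univ.filter (fun b => F.s b = u), A (Sum.inr b) := by
    intro M _ A w u hw
    symm
    refine Finset.sum_bij (fun b _ => Sum.inr b) ?_ ?_ ?_ ?_
    · intro b hb
      exact Finset.mem_filter.mpr ⟨Finset.mem_univ _,
        (congrArg Sum.inr (Finset.mem_filter.mp hb).2).trans hw.symm⟩
    · exact fun _ _ _ _ h => Sum.inr_injective h
    · rintro (⟨⟨⟩⟩ | b) hb
      exact ⟨b, Finset.mem_filter.mpr ⟨Finset.mem_univ _,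
        Sum.inr_injective ((Finset.mem_filter.mp hb).2.trans hw)⟩, rfl⟩
    · exact fun _ _ => rfl
  obtain ⟨θ, θv, θe, θg⟩ := Family.exists_lift (K := K) (G := F)
    (Q := LeavittPathAlgebra K ((discrete k).disjUnion F))
    { v := fun v => vert K ((discrete k).disjUnion F) (Sum.inr v)
      e := fun e => edge K ((discrete k).disjUnion F) (Sum.inr e)
      g := fun e => ghost K ((discrete k).disjUnion F) (Sum.inr e)
      v_mul_v := fun u w => (vert_mul_vert _ _).trans
        (ite_congr_iff Sum.inr_injective.eq_iff rfl rfl)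
      v_mul_e := fun e => vert_mul_edge' rfl
      e_mul_v := fun e => edge_mul_vert' rfl
      v_mul_g := fun e => vert_mul_ghost' rfl
      g_mul_v := fun e => ghost_mul_vert' rfl
      g_mul_e := fun e f => (ghost_mul_edge _ _).trans
        (ite_congr_iff Sum.inr_injective.eq_iff rfl rfl)
      ck := fun u hu => (vert_eq_sum _ (disjUnion_isRegular _ _ hu)).trans (sum_edges _ _ u rfl) }
  have hsingle : ∀ i j : Fin k, (Pi.single i 1 * Pi.single j 1 : Fin k → K) =
      if i = j then Pi.single i 1 else 0 := fun i j => by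
    funext l
    simp only [Pi.mul_apply, Pi.single_apply]
    by_cases hl : l = i
    · subst hl
      by_cases h : l = j <;> simp [h]
    · by_cases h : i = j
      · subst h; simp [hl]
      · simp [h, hl]
  obtain ⟨φ, φv, φe, φg⟩ := Family.exists_lift (K := K) (G := (discrete k).disjUnion F)
    (Q := (Fin k → K) × LeavittPathAlgebra K F)
    { v := Sum.elim (fun i : Fin k => (Pi.single i 1, 0)) (fun u => (0, vert K F u))
      e := Sum.elim Empty.elim (fun e => (0, edge K F e))
      g := Sum.elim Empty.elim (fun e => (0, ghost K F e))
      v_mul_v := by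
        rintro (i | u) (j | w)
        · refine Eq.trans ?_ (ite_congr_iff (p := i = j) (hp := inferInstance)
            Sum.inl_injective.eq_iff.symm rfl rfl)
          refine Prod.ext ((hsingle i j).trans ?_) ((mul_zero _).trans ?_)
          · by_cases h : i = j
            · rw [if_pos h]; exact if_pos h
            · rw [if_neg h]; exact if_neg h
          · split_ifs <;> rfl
        · exact (Prod.ext (mul_zero _) (zero_mul _)).trans (if_neg Sum.inl_ne_inr).symm
        · exact (Prod.ext (zero_mul _) (mul_zero _)).trans (if_neg Sum.inr_ne_inl).symm
        · refine Eq.trans ?_ (ite_congr_iff (p := u = w) (hp := inferInstance)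
            Sum.inr_injective.eq_iff.symm rfl rfl)
          refine Prod.ext ((mul_zero _).trans ?_) ((vert_mul_vert _ _).trans ?_)
          · split_ifs <;> rfl
          · split_ifs <;> rfl
      v_mul_e := by
        rintro (⟨⟨⟩⟩ | e)
        exact Prod.ext (mul_zero _) (vert_mul_edge e)
      e_mul_v := by
        rintro (⟨⟨⟩⟩ | e)
        exact Prod.ext (mul_zero _) (edge_mul_vert e)
      v_mul_g := by
        rintro (⟨⟨⟩⟩ | e)
        exact Prod.ext (mul_zero _) (vert_mul_ghost e)
      g_mul_v := by
        rintro (⟨⟨⟩⟩ | e)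
        exact Prod.ext (mul_zero _) (ghost_mul_vert e)
      g_mul_e := by
        rintro (⟨⟨⟩⟩ | e) (⟨⟨⟩⟩ | f)
        refine Eq.trans ?_ (ite_congr_iff (p := e = f) (hp := inferInstance)
            Sum.inr_injective.eq_iff.symm rfl rfl)
        refine Prod.ext ((mul_zero _).trans ?_) ((ghost_mul_edge _ _).trans ?_)
        · split_ifs <;> rfl
        · split_ifs <;> rfl
      ck := by
        rintro (i | u) hu
        · obtain ⟨⟨⟨⟩⟩ | e, he⟩ := hu
          exact (Sum.inr_ne_inl he).elim
        · have hu' : F.IsRegular u := by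
            obtain ⟨⟨⟨⟩⟩ | e, he⟩ := hu
            exact ⟨e, Sum.inr_injective he⟩
          refine Eq.trans ?_ (sum_edges _ _ u rfl).symm
          refine Prod.ext ?_ ?_
          · rw [Prod.fst_sum]
            exact (Finset.sum_eq_zero fun b _ => mul_zero _).symm
          · rw [Prod.snd_sum]
            exact vert_eq_sum u hu' }
  have hφθ : ∀ x, φ (θ x) = (0, x) := by
    intro x
    induction x using induction with
    | hv u => rw [θv]; exact φv _
    | he e => rw [θe]; exact φe _
    | hg e => rw [θg]; exact φg _
    | h0 => rw [map_zero, map_zero]; rfl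
    | hadd x y hx hy => rw [map_add, map_add, hx, hy, Prod.mk_add_mk, add_zero]
    | hmul x y hx hy => rw [map_mul, map_mul, hx, hy, Prod.mk_mul_mk, mul_zero]
    | hsmul c x hx => rw [map_smul, map_smul, hx, Prod.smul_mk, smul_zero]
  -- The map inverse to `φ`.
  let χ : (Fin k → K) × LeavittPathAlgebra K F → LeavittPathAlgebra K ((discrete k).disjUnion F) :=
    fun y => ∑ i, y.1 i • vert K ((discrete k).disjUnion F) (Sum.inl i) + θ y.2
  have χ_add : ∀ y z, χ (y + z) = χ y + χ z := fun y z => by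
    simp only [χ, Prod.fst_add, Prod.snd_add, Pi.add_apply, add_smul, Finset.sum_add_distrib,
      map_add]
    abel
  have χ_smul : ∀ (c : K) y, χ (c • y) = c • χ y := fun c y => by
    simp only [χ, Prod.smul_fst, Prod.smul_snd, Pi.smul_apply, smul_eq_mul, mul_smul, map_smul,
      smul_add, Finset.smul_sum]
  have χ_zero : χ 0 = 0 := by simp [χ]
  have hvθ : ∀ (i : Fin k) x, vert K ((discrete k).disjUnion F) (Sum.inl i) * θ x = 0 := by
    intro i x
    rw [← nonUnitalHom_one_mul, one_eq_sum, map_sum, ← mul_assoc, Finset.mul_sum,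
      Finset.sum_eq_zero, zero_mul]
    intro u _
    rw [θv]
    exact vert_mul_vert_of_ne Sum.inl_ne_inr
  have hθv : ∀ (i : Fin k) x, θ x * vert K ((discrete k).disjUnion F) (Sum.inl i) = 0 := by
    intro i x
    rw [← nonUnitalHom_mul_one, one_eq_sum, map_sum, mul_assoc, Finset.sum_mul,
      Finset.sum_eq_zero, mul_zero]
    intro u _
    rw [θv]
    exact vert_mul_vert_of_ne Sum.inr_ne_inl
  have χ_mul : ∀ y z, χ (y * z) = χ y * χ z := fun y z => by
    have h1 : ∀ i j : Fin k, vert K ((discrete k).disjUnion F) (Sum.inl i) *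
        vert K ((discrete k).disjUnion F) (Sum.inl j) =
        if i = j then vert K ((discrete k).disjUnion F) (Sum.inl i) else 0 := fun i j =>
      (vert_mul_vert _ _).trans (ite_congr_iff Sum.inl_injective.eq_iff rfl rfl)
    simp only [χ, Prod.fst_mul, Prod.snd_mul, Pi.mul_apply, map_mul, add_mul, mul_add,
      Finset.sum_mul, Finset.mul_sum, smul_mul_assoc, mul_smul_comm, hvθ, hθv, h1, smul_zero,
      Finset.sum_const_zero, add_zero, zero_add, smul_ite, Finset.sum_ite_eq, Finset.sum_ite_eq',
      Finset.mem_univ, if_true, smul_smul]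
    simp only [mul_comm]
  have χ_single : ∀ i : Fin k, χ (Pi.single i 1, 0) = vert K _ (Sum.inl i) := fun i => by
    have h : ∀ f : Fin k → LeavittPathAlgebra K ((discrete k).disjUnion F),
        ∑ j, (Pi.single i 1 : Fin k → K) j • f j = f i := fun f => by
      simp [Pi.single_apply]
    simp only [χ, map_zero, add_zero]
    exact h fun j => vert K _ (Sum.inl j)
  have χ_snd : ∀ x, χ (0, x) = θ x := fun x => by
    simp only [χ, Pi.zero_apply, zero_smul, Finset.sum_const_zero, zero_add]
  have hχφ : ∀ x, χ (φ x) = x := by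
    intro x
    induction x using induction with
    | hv u =>
      rcases u with i | u
      · exact (congrArg χ (φv _)).trans (χ_single i)
      · exact (congrArg χ (φv _)).trans ((χ_snd _).trans (θv u))
    | he e =>
      rcases e with ⟨⟨⟩⟩ | e
      exact (congrArg χ (φe _)).trans ((χ_snd _).trans (θe e))
    | hg e =>
      rcases e with ⟨⟨⟩⟩ | e
      exact (congrArg χ (φg _)).trans ((χ_snd _).trans (θg e))
    | h0 => rw [map_zero, χ_zero]
    | hadd x y hx hy => rw [map_add, χ_add, hx, hy]
    | hmul x y hx hy => rw [map_mul, χ_mul, hx, hy]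
    | hsmul c x hx => rw [map_smul, χ_smul, hx]
  have hφχ : ∀ y, φ (χ y) = y := by
    intro y
    have hφv : ∀ i : Fin k, φ (vert K ((discrete k).disjUnion F) (Sum.inl i)) =
      (Pi.single i 1, 0) := fun i => φv _
    simp only [χ, map_add, map_sum, map_smul, hφθ, hφv]
    refine Prod.ext ?_ ?_
    · funext l
      simp [Prod.fst_sum, Finset.sum_apply, Pi.single_apply]
    · simp [Prod.snd_sum]
  refine IsMatrixCorner.of_bijective
    { toFun := χ, map_smul' := χ_smul, map_zero' := χ_zero, map_add' := χ_add,
      map_mul' := χ_mul } ⟨?_, ?_⟩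
  · exact fun y z h => (hφχ y).symm.trans ((congrArg φ h).trans (hφχ z))
  · exact fun x => ⟨φ x, hχφ x⟩

end LeavittPathAlgebra

/-! ### Full corners of matrices over a product -/

/-- An idempotent matrix over a field factors through its range. -/
theorem exists_factor_of_isIdempotentElem {K : Type} [Field K] {n : ℕ}
    {p : Matrix (Fin n) (Fin n) K} (hp : p * p = p) :
    ∃ (m : ℕ) (B : Matrix (Fin n) (Fin m) K) (C : Matrix (Fin m) (Fin n) K),
      B * C = p ∧ C * B = 1 := by
  let f := Matrix.toLin' p
  have hf : ∀ x, f (f x) = f x := fun x => by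
    simp only [f, Matrix.toLin'_apply, Matrix.mulVec_mulVec, hp]
  let b := Module.finBasis K (LinearMap.range f)
  refine ⟨_, LinearMap.toMatrix' ((LinearMap.range f).subtype ∘ₗ b.equivFun.symm.toLinearMap),
    LinearMap.toMatrix' (b.equivFun.toLinearMap ∘ₗ f.rangeRestrict), ?_, ?_⟩
  · rw [← LinearMap.toMatrix'_comp]
    refine Eq.trans (congrArg _ ?_) (LinearMap.toMatrix'_toLin' p)
    refine LinearMap.ext fun x => ?_
    simp [f]
  · rw [← LinearMap.toMatrix'_comp, ← LinearMap.toMatrix'_id]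
    refine congrArg _ (LinearMap.ext fun x => ?_)
    have h : ∀ y : LinearMap.range f, f.rangeRestrict y = y := by
      rintro ⟨_, y, rfl⟩
      exact Subtype.ext (hf y)
    simp only [LinearMap.comp_apply, LinearEquiv.coe_coe, Submodule.subtype_apply, h,
      LinearEquiv.apply_symm_apply, LinearMap.id_apply]

theorem IsFull.isFullIdempotent {R : Type} [Ring R] {p : R} (hp : IsFull p)
    (h : p * p = p) : IsFullIdempotent p := by
  obtain ⟨α, _, _, a, b, hab⟩ := hp
  refine ⟨h, Fintype.card α, a ∘ (Fintype.equivFin α).symm, b ∘ (Fintype.equivFin α).symm, ?_⟩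
  rw [← hab]
  exact (Fintype.equivFin α).symm.sum_comp fun i => a i * p * b i

/-- A full corner of a matrix algebra over `K ^ k × R` splits into `k` full corners of matrix
algebras over `K`, each of which is itself a matrix algebra of positive size, and a full corner of
a matrix algebra over `R`. -/
theorem IsMatrixCorner.exists_iso_prod {K : Type} [Field K] {S R : Type} [Ring S] [Ring R]
    [Algebra K S] [Algebra K R] {k : ℕ} (h : IsMatrixCorner K S ((Fin k → K) × R)) :
    ∃ m : Fin k → ℕ, (∀ i, 0 < m i) ∧ ∃ n : ℕ, 0 < n ∧ ∃ p : Matrix (Fin n) (Fin n) R,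
      IsFullIdempotent p ∧
      IsCornerIso K S (((i : Fin k) → Matrix (Fin (m i)) (Fin (m i)) K) ×
        Matrix (Fin n) (Fin n) R) (1, p) := by
  obtain ⟨ι, _, _, _, φ₀, hφ₀⟩ := h
  obtain ⟨n, hn, φ, hφ⟩ : ∃ n : ℕ, 0 < n ∧
      ∃ φ : S →ₙₐ[K] Matrix (Fin n) (Fin n) ((Fin k → K) × R), IsFullCornerEmb φ :=
    ⟨_, Fintype.card_pos, _, (isFullCornerEmb_algEquiv
      (Matrix.reindexAlgEquiv K ((Fin k → K) × R) (Fintype.equivFin ι))).comp hφ₀⟩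
  have : Nonempty (Fin n) := ⟨⟨0, hn⟩⟩
  let ψ (i : Fin k) : Matrix (Fin n) (Fin n) ((Fin k → K) × R) →ₐ[K] Matrix (Fin n) (Fin n) K :=
    ((Pi.evalAlgHom K (fun _ : Fin k => K) i).comp (AlgHom.fst K (Fin k → K) R)).mapMatrix
  let ψ' : Matrix (Fin n) (Fin n) ((Fin k → K) × R) →ₐ[K] Matrix (Fin n) (Fin n) R :=
    (AlgHom.snd K (Fin k → K) R).mapMatrix
  have hext : ∀ x y, (∀ i, ψ i x = ψ i y) → ψ' x = ψ' y → x = y := by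
    intro x y h h'
    ext a b
    · rename_i i
      exact congrFun (congrFun (h i) a) b
    · exact congrFun (congrFun h' a) b
  have hidem : φ 1 * φ 1 = φ 1 := nonUnitalHom_one_mul φ 1
  choose m B C hBC hCB using fun i => exists_factor_of_isIdempotentElem (p := ψ i (φ 1))
    (by rw [← map_mul, hidem])
  obtain ⟨α, _, _, a, b, hab⟩ := hφ.full
  refine ⟨m, ?_, n, hn, ψ' (φ 1), ?_, ?_⟩
  · intro i
    rw [Nat.pos_iff_ne_zero]
    intro hm
    -- If the corner is zero, then so is `M_n(K)`, as the idempotent is full.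
    have h0 : ψ i (φ 1) = 0 := by
      rw [← hBC]
      have : IsEmpty (Fin (m i)) := by rw [hm]; infer_instance
      ext a b
      simp [Matrix.mul_apply]
    have h1 := congrArg (ψ i) hab
    simp [h0] at h1
  · refine IsFull.isFullIdempotent ⟨α, inferInstance, inferInstance, fun i => ψ' (a i),
      fun i => ψ' (b i), ?_⟩ (by rw [← map_mul, hidem])
    simpa only [map_sum, map_mul, map_one] using congrArg ψ' hab
  · have hψ : ∀ i s, B i * (C i * ψ i (φ s) * B i) * C i = ψ i (φ s) := by
      intro i s
      calc _ = (B i * C i) * ψ i (φ s) * (B i * C i) := by simp only [Matrix.mul_assoc]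
        _ = _ := by
          rw [hBC, ← map_mul, ← map_mul, nonUnitalHom_one_mul, nonUnitalHom_mul_one]
    refine ⟨
      { toFun := fun s => (fun i => C i * ψ i (φ s) * B i, ψ' (φ s))
        map_smul' := fun c s => ?_
        map_zero' := ?_
        map_add' := fun s t => ?_
        map_mul' := fun s t => ?_ }, ?_, ?_⟩
    · refine Prod.ext (funext fun i => ?_) ?_
      · simp [Matrix.mul_assoc]
      · simp
    · refine Prod.ext (funext fun i => ?_) ?_
      · simp
      · simp
    · refine Prod.ext (funext fun i => ?_) ?_
      · simp [Matrix.mul_add, Matrix.add_mul]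
      · simp
    · refine Prod.ext (funext fun i => ?_) ?_
      · refine Eq.symm ?_
        calc C i * ψ i (φ s) * B i * (C i * ψ i (φ t) * B i)
            = C i * (ψ i (φ s) * (B i * C i) * ψ i (φ t)) * B i := by
              simp only [Matrix.mul_assoc]
          _ = _ := by
            rw [hBC, ← map_mul, ← map_mul, nonUnitalHom_mul_one, ← map_mul]
      · simp
    · intro s t hst
      have hst' : ((fun i => C i * ψ i (φ s) * B i, ψ' (φ s)) :
          ((i : Fin k) → Matrix (Fin (m i)) (Fin (m i)) K) × Matrix (Fin n) (Fin n) R) =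
          (fun i => C i * ψ i (φ t) * B i, ψ' (φ t)) := hst
      refine hφ.inj (hext _ _ (fun i => ?_) (congrArg Prod.snd hst'))
      have hi : C i * ψ i (φ s) * B i = C i * ψ i (φ t) * B i :=
        congrFun (congrArg Prod.fst hst') i
      rw [← hψ i s, hi, hψ i t]
    · ext ⟨x, y⟩
      constructor
      · rintro ⟨s, hs⟩
        have hs' : (fun i => C i * ψ i (φ s) * B i, ψ' (φ s)) = (x, y) := hs
        obtain ⟨-, rfl⟩ := Prod.mk.inj hs'
        refine Prod.ext ?_ ?_
        · exact (mul_one _).trans (one_mul _)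
        · change ψ' (φ 1) * ψ' (φ s) * ψ' (φ 1) = ψ' (φ s)
          rw [← map_mul, ← map_mul, nonUnitalHom_one_mul, nonUnitalHom_mul_one]
      · intro hxy
        have hy : ψ' (φ 1) * y * ψ' (φ 1) = y := congrArg Prod.snd hxy
        let z : Matrix (Fin n) (Fin n) ((Fin k → K) × R) :=
          Matrix.of fun a b => (fun i => (B i * x i * C i) a b, y a b)
        have hz : ∀ i, ψ i z = B i * x i * C i := fun i => rfl
        have hz' : ψ' z = y := rfl
        obtain ⟨s, hs⟩ := hφ.surj z (hext _ _ (fun i => by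
          rw [map_mul, map_mul, hz, ← hBC]
          calc B i * C i * (B i * x i * C i) * (B i * C i)
              = B i * (C i * B i) * x i * ((C i * B i) * C i) := by simp only [Matrix.mul_assoc]
            _ = _ := by rw [hCB, Matrix.mul_one, Matrix.one_mul])
          (by rw [map_mul, map_mul, hz', hy]))
        refine ⟨s, Prod.ext (funext fun i => ?_) ?_⟩
        · change C i * ψ i (φ s) * B i = x i
          rw [hs, hz]
          calc C i * (B i * x i * C i) * B i
              = (C i * B i) * x i * (C i * B i) := by simp only [Matrix.mul_assoc]
            _ = _ := by rw [hCB, Matrix.mul_one, Matrix.one_mul]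
        · change ψ' (φ s) = y
          rw [hs, hz']

/-- `L_K(E)` is isomorphic to a direct sum of matrix rings over `K`,
direct sum with a corner of a matrix ring over `L_K(F)` by a full idempotent. -/
theorem decomposition_iso (K : Type) [Field K] (E Esf F : FinGraph)
    (c : FinGraph.ElimChain E Esf) (hsf : Esf.IsSourceFree ∨ Esf.IsTrivial)
    (hne : Nonempty Esf.V) (cc : FinGraph.CollapseChain Esf F) (hF : F.TotallyLooped)
    (k : ℕ) (hk : k = Nat.card {v : E.V // E.IsSink v ∧ v ∉ Set.range c.vmap}) :
    ∃ m : Fin k → ℕ, (∀ i, 0 < m i) ∧ ∃ n : ℕ, 0 < n ∧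
      ∃ p : Matrix (Fin n) (Fin n) (LeavittPathAlgebra K F),
        IsFullIdempotent p ∧
        IsCornerIso K (LeavittPathAlgebra K E)
          (((i : Fin k) → Matrix (Fin (m i)) (Fin (m i)) K) ×
            Matrix (Fin n) (Fin n) (LeavittPathAlgebra K F))
          (1, p) := by
  subst hk
  exact (((LeavittPathAlgebra.isMatrixCorner_of_elimChain K c).trans
    (LeavittPathAlgebra.isMatrixCorner_of_collapseChain K _ cc)).trans
    (LeavittPathAlgebra.disjUnion_isMatrixCorner K _ F)).exists_iso_prod
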